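/- Assume the Gaussian-basis model where the planted vector v ∈ ℝ^N is random with i.i.d. Bernoulli–Rademacher entries BR(N,ρ) (each entry equals 0 with probability 1−ρ and ±1/√(Nρ) each with probability ρ/2): let Y ∈ ℝ^{N×n} have first column v and remaining n−1 columns i.i.d. N(0, (1/N) I_N), let Q ∈ ℝ^{n×n} be an arbitrary orthogonal matrix, and observe Ỹ = YQ. Let M̃ := Σ_{i=1}^N (‖ỹ_i‖² − (n−1)/N) ỹ_i ỹ_iᵀ − (3/N) I_n with ỹ_iᵀ the rows of Ỹ, and let ũ be the unit leading eigenvector of M̃. Fix a constant c₁ ∈ (0, 0.1). There exist constants C₂, c₃ > 0 depending only on c₁ such that for every δ ∈ (0,1/2): if N ≥ log⁷(N/δ), ρ ≥ C₂·log(1/δ)/N, |ρ − 1/3| ≥ c₁, and (nρ/√N + √(n/N))·log(N/δ) ≤ c₃, then with probability at least 1−δ there is a sign s ∈ {±1} such that the vector with j-th entry (1/√(Nρ))·sign(s·(Ỹũ)_j)·1{|(Ỹũ)_j| ≥ 0.5/√(Nρ)} equals v exactly. -/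

import Mathlib

open MeasureTheory ProbabilityTheory Matrix

/-- Euclidean norm of a vector in `ℝ^k`. -/
noncomputable def eucNorm {k : ℕ} (v : Fin k → ℝ) : ℝ := Real.sqrt (∑ i, (v i) ^ 2)

/-- ℓ_p norm of a vector in `ℝ^k`. -/
noncomputable def lpNorm {k : ℕ} (p : ℝ) (v : Fin k → ℝ) : ℝ := (∑ i, |v i| ^ p) ^ (1 / p)

/-- Supremum (ℓ_∞) norm of a vector in `ℝ^k`. -/
noncomputable def supNorm {k : ℕ} (v : Fin k → ℝ) : ℝ := ⨆ i, |v i|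

/-- The Gaussian measure `N(0, σ2 · I_k)` on `ℝ^k`. -/
noncomputable def gaussVec (k : ℕ) (σ2 : NNReal) : Measure (Fin k → ℝ) :=
  Measure.pi fun _ => gaussianReal 0 σ2

instance (k : ℕ) (σ2 : NNReal) : IsProbabilityMeasure (gaussVec k σ2) := by
  unfold gaussVec; infer_instance

/-- The law of `N` i.i.d. samples from `N(0, σ2 · I_k)`. -/
noncomputable def iidGaussVec (N k : ℕ) (σ2 : NNReal) : Measure (Fin N → Fin k → ℝ) :=
  Measure.pi fun _ => gaussVec k σ2

/-- Concatenation `(a, bᵀ)ᵀ ∈ ℝ^n` of a scalar `a` with a vector `b ∈ ℝ^{n-1}`. -/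
noncomputable def rowCat {n : ℕ} (a : ℝ) (b : Fin (n - 1) → ℝ) : Fin n → ℝ :=
  fun j => if h : (j : ℕ) = 0 then a else b ⟨(j : ℕ) - 1, by have := j.isLt; omega⟩

/-- The `N × n` matrix whose rows are `y_iᵀ = (v_i, b_iᵀ)`, i.e. whose first column is `v`
and whose remaining `n - 1` columns are given by `B`. -/
noncomputable def gaussBasis {N n : ℕ} (v : Fin N → ℝ) (B : Fin N → Fin (n - 1) → ℝ) :
    Matrix (Fin N) (Fin n) ℝ :=
  Matrix.of fun i => rowCat (v i) (B i)

/-- The matrix `M(Y) = ∑_i (‖y_i‖² - (n-1)/N) y_i y_iᵀ - (3/N) I_n` built from the rows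
`y_iᵀ` of `Y`. -/
noncomputable def specMat {N n : ℕ} (Y : Matrix (Fin N) (Fin n) ℝ) :
    Matrix (Fin n) (Fin n) ℝ :=
  (∑ i, ((∑ j, (Y i j) ^ 2) - ((n : ℝ) - 1) / N) • Matrix.vecMulVec (Y i) (Y i))
    - ((3 : ℝ) / N) • (1 : Matrix (Fin n) (Fin n) ℝ)

/-- `u` is a unit leading eigenvector of the (symmetric) matrix `M`: a unit eigenvector
whose eigenvalue has the largest absolute value among all eigenvalues of `M`. -/
def IsLeadingEigen {n : ℕ} (M : Matrix (Fin n) (Fin n) ℝ) (u : Fin n → ℝ) : Prop :=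
  eucNorm u = 1 ∧ ∃ μ : ℝ, M.mulVec u = μ • u ∧
    ∀ μ' : ℝ, (∃ w : Fin n → ℝ, w ≠ 0 ∧ M.mulVec w = μ' • w) → |μ'| ≤ |μ|

/-- The quantity `η = η(N, n, v, δ)` with universal constant `C`. -/
noncomputable def etaBound (C : ℝ) (N n : ℕ) (v : Fin N → ℝ) (δ : ℝ) : ℝ :=
  C * ((eucNorm v + 1) * n * Real.sqrt (Real.log (N / δ)) / (N : ℝ) ^ ((3 : ℝ) / 2)
    + lpNorm 4 v ^ 2 * Real.sqrt (n * Real.log (N / δ)) / N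
    + lpNorm 6 v ^ 3 * (Real.sqrt n + Real.sqrt (Real.log (N / δ))) / Real.sqrt N
    + supNorm v ^ 2 * (n * Real.log (N / δ) + (Real.log (N / δ)) ^ 2) / N
    + (n * Real.log (N / δ)) ^ ((3 : ℝ) / 2) / (N : ℝ) ^ 2
    + |eucNorm v ^ 2 - 1| / N)

/-- The Bernoulli–Rademacher distribution on `ℝ`: `0` w.p. `1-ρ`, `±1/√(Nρ)` w.p. `ρ/2` each. -/
noncomputable def brMeasure (N : ℕ) (ρ : ℝ) : Measure ℝ :=
  (Real.toNNReal (1 - ρ)) • Measure.dirac 0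
    + (Real.toNNReal (ρ / 2)) • Measure.dirac (Real.sqrt (N * ρ))⁻¹
    + (Real.toNNReal (ρ / 2)) • Measure.dirac (-(Real.sqrt (N * ρ))⁻¹)

instance (N : ℕ) (ρ : ℝ) : IsFiniteMeasure (brMeasure N ρ) := by
  unfold brMeasure; infer_instance

/-- The law of a Bernoulli–Rademacher vector `v ∼ BR(N, ρ)` with i.i.d. entries. -/
noncomputable def brVec (N : ℕ) (ρ : ℝ) : Measure (Fin N → ℝ) :=
  Measure.pi fun _ => brMeasure N ρ

instance (N : ℕ) (ρ : ℝ) : IsFiniteMeasure (brVec N ρ) := by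
  unfold brVec; infer_instance

namespace PlantedVector

lemma one_le_one_sub_mul_exp {y : ℝ} (hy : |y| ≤ 1 / 2) :
    1 ≤ (1 - y) * Real.exp (y + y ^ 2) := by
  obtain ⟨h1, h2⟩ := abs_le.1 hy
  rcases le_total y 0 with h | h
  · have h3 := Real.add_one_le_exp (y + y ^ 2)
    have h4 : (1 - y) * (y + y ^ 2 + 1) ≤ (1 - y) * Real.exp (y + y ^ 2) :=
      mul_le_mul_of_nonneg_left h3 (by linarith)
    nlinarith [sq_nonneg y]
  · have h3 := Real.quadratic_le_exp_of_nonneg (x := y + y ^ 2) (by positivity)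
    have h4 := mul_le_mul_of_nonneg_left h3 (show 0 ≤ 1 - y by linarith)
    refine le_trans ?_ h4
    have h5 : 0 ≤ y ^ 2 * ((1 - y) * (1 + y) ^ 2 / 2 - y) := by
      apply mul_nonneg (by positivity)
      nlinarith [mul_nonneg h h]
    nlinarith

lemma lintegral_exp_mul_sq_gaussianReal {s : ℝ} (hs : s < 1 / 2) :
    ∫⁻ x, ENNReal.ofReal (Real.exp (s * x ^ 2)) ∂gaussianReal 0 1
      = ENNReal.ofReal (√(1 / (1 - 2 * s))) := by
  rw [gaussianReal_of_var_ne_zero 0 one_ne_zero,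
    lintegral_withDensity_eq_lintegral_mul _ (measurable_gaussianPDF 0 1) (by fun_prop)]
  have h1 : ∀ x : ℝ, (gaussianPDF 0 1 * fun x => ENNReal.ofReal (Real.exp (s * x ^ 2))) x
      = ENNReal.ofReal ((√(2 * Real.pi))⁻¹ * Real.exp (-(1 / 2 - s) * x ^ 2)) := by
    intro x
    rw [Pi.mul_apply, gaussianPDF, ← ENNReal.ofReal_mul (gaussianPDFReal_nonneg _ _ _),
      gaussianPDFReal, mul_assoc, ← Real.exp_add]
    congr 3
    · simp
    · simp; ring
  simp_rw [h1]
  rw [← ofReal_integral_eq_lintegral_ofReal]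
  · rw [integral_const_mul, integral_gaussian]
    congr 1
    rw [← Real.sqrt_inv, ← Real.sqrt_mul (by positivity)]
    congr 1
    have : (1 / 2 - s) ≠ 0 := by linarith
    have : (1 - 2 * s) ≠ 0 := by linarith
    have := Real.pi_pos.ne'
    field_simp
  · exact (integrable_exp_neg_mul_sq (by linarith)).const_mul _
  · exact Filter.Eventually.of_forall fun x => by positivity

lemma lintegral_exp_mul_sq_sub_one_le {s : ℝ} (hs : |s| ≤ 1 / 4) :
    ∫⁻ x, ENNReal.ofReal (Real.exp (s * (x ^ 2 - 1))) ∂gaussianReal 0 1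
      ≤ ENNReal.ofReal (Real.exp (2 * s ^ 2)) := by
  obtain ⟨h1, h2⟩ := abs_le.1 hs
  have h : ∀ x : ℝ, ENNReal.ofReal (Real.exp (s * (x ^ 2 - 1)))
      = ENNReal.ofReal (Real.exp (-s)) * ENNReal.ofReal (Real.exp (s * x ^ 2)) := by
    intro x
    rw [← ENNReal.ofReal_mul (by positivity), ← Real.exp_add]
    congr 2; ring
  simp_rw [h]
  rw [lintegral_const_mul _ (by fun_prop), lintegral_exp_mul_sq_gaussianReal (by linarith),
    ← ENNReal.ofReal_mul (by positivity)]
  apply ENNReal.ofReal_le_ofReal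
  have h3 : √(1 / (1 - 2 * s)) ≤ Real.exp (s + 2 * s ^ 2) := by
    apply Real.sqrt_le_iff.2 ⟨by positivity, ?_⟩
    rw [div_le_iff₀ (by linarith), ← Real.exp_nat_mul]
    have := one_le_one_sub_mul_exp (y := 2 * s) (by rw [abs_mul]; norm_num; linarith)
    calc (1 : ℝ) ≤ _ := this
      _ = _ := by rw [mul_comm]; congr 2; push_cast; ring
  calc Real.exp (-s) * √(1 / (1 - 2 * s)) ≤ Real.exp (-s) * Real.exp (s + 2 * s ^ 2) := by gcongr
    _ = _ := by rw [← Real.exp_add]; congr 1; ring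

lemma lintegral_pi_prod {ι : Type*} [Fintype ι] {X : ι → Type*} [∀ i, MeasurableSpace (X i)]
    (μ : ∀ i, Measure (X i)) [∀ i, IsProbabilityMeasure (μ i)] (f : ∀ i, X i → ENNReal)
    (hf : ∀ i, Measurable (f i)) :
    ∫⁻ x, ∏ i, f i (x i) ∂Measure.pi μ = ∏ i, ∫⁻ y, f i y ∂μ i := by
  have h := iIndepFun_pi (μ := μ) (X := f) (fun i => (hf i).aemeasurable)
  rw [lintegral_prod_eq_prod_lintegral_of_indepFun Finset.univ _ h
    (fun i => (hf i).comp (measurable_pi_apply i))]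
  refine Finset.prod_congr rfl fun i _ => ?_
  have hm := (measurePreserving_eval μ i).map_eq
  conv_rhs => rw [← hm]
  rw [lintegral_map (hf i) (measurable_pi_apply i)]

/-- Chernoff's bound for a sum of independent truncated variables. -/
lemma measure_pi_le_sum_le {ι : Type*} [Fintype ι] {X : ι → Type*} [∀ i, MeasurableSpace (X i)]
    (μ : ∀ i, Measure (X i)) [∀ i, IsProbabilityMeasure (μ i)] (f : ∀ i, X i → ℝ)
    (hf : ∀ i, Measurable (f i)) (G : ∀ i, Set (X i)) (hG : ∀ i, MeasurableSet (G i))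
    (a : ι → ℝ) (t : ℝ)
    (h : ∀ i, ∫⁻ y, (G i).indicator (fun y => ENNReal.ofReal (Real.exp (f i y))) y ∂μ i
      ≤ ENNReal.ofReal (Real.exp (a i))) :
    Measure.pi μ {x | (∀ i, x i ∈ G i) ∧ t ≤ ∑ i, f i (x i)}
      ≤ ENNReal.ofReal (Real.exp (∑ i, a i - t)) := by
  have hF : ∀ i, Measurable ((G i).indicator (fun y => ENNReal.ofReal (Real.exp (f i y)))) :=
    fun i => Measurable.indicator (by have := hf i; fun_prop) (hG i)
  have h1 := lintegral_pi_prod μ _ hF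
  have h2 : ∫⁻ x, ∏ i, (G i).indicator (fun y => ENNReal.ofReal (Real.exp (f i y))) (x i)
      ∂Measure.pi μ ≤ ENNReal.ofReal (Real.exp (∑ i, a i)) := by
    rw [h1, Real.exp_sum, ENNReal.ofReal_prod_of_nonneg (fun i _ => by positivity)]
    exact Finset.prod_le_prod' fun i _ => h i
  have h3 := mul_meas_ge_le_lintegral₀ (μ := Measure.pi μ)
    (f := fun x => ∏ i, (G i).indicator (fun y => ENNReal.ofReal (Real.exp (f i y))) (x i))
    (by
      refine Measurable.aemeasurable (Finset.measurable_prod _ fun i _ => ?_)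
      exact (hF i).comp (measurable_pi_apply i)) (ENNReal.ofReal (Real.exp t))
  have h4 : {x : ∀ i, X i | (∀ i, x i ∈ G i) ∧ t ≤ ∑ i, f i (x i)} ⊆
      {x | ENNReal.ofReal (Real.exp t) ≤
        ∏ i, (G i).indicator (fun y => ENNReal.ofReal (Real.exp (f i y))) (x i)} := by
    rintro x ⟨hx, hx'⟩
    have : ∏ i, (G i).indicator (fun y => ENNReal.ofReal (Real.exp (f i y))) (x i)
        = ENNReal.ofReal (Real.exp (∑ i, f i (x i))) := by
      rw [Real.exp_sum, ENNReal.ofReal_prod_of_nonneg (fun i _ => by positivity)]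
      exact Finset.prod_congr rfl fun i _ => Set.indicator_of_mem (hx i) _
    simp only [Set.mem_ofPred_eq, this]
    exact ENNReal.ofReal_le_ofReal (Real.exp_le_exp.2 hx')
  rw [Real.exp_sub, ENNReal.ofReal_div_of_pos (by positivity),
    ENNReal.le_div_iff_mul_le (by left; simp [Real.exp_pos]) (by simp), mul_comm]
  exact (mul_le_mul_right (measure_mono h4) _).trans (h3.trans h2)

lemma integral_pow_four_gaussianReal : ∫ x : ℝ, x ^ 4 ∂gaussianReal 0 1 = 3 := by
  have hd : ∀ (n : ℕ) (t : ℝ), HasDerivAt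
      (fun t => ∫ x : ℝ, x ^ n * Real.exp (t * x) ∂gaussianReal 0 1)
      (∫ x : ℝ, x ^ (n + 1) * Real.exp (t * x) ∂gaussianReal 0 1) t := by
    intro n t
    exact hasDerivAt_integral_pow_mul_exp_real (X := id) (μ := gaussianReal 0 1) (t := t)
      (by simp) n
  have hE : ∀ t : ℝ, HasDerivAt (fun t : ℝ => Real.exp (t ^ 2 / 2)) (t * Real.exp (t ^ 2 / 2)) t := by
    intro t
    convert! ((hasDerivAt_pow 2 t).div_const 2).exp using 1
    simp; ring
  have h0 : (fun t : ℝ => ∫ x : ℝ, x ^ 0 * Real.exp (t * x) ∂gaussianReal 0 1)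
      = fun t => Real.exp (t ^ 2 / 2) := by
    have := mgf_id_gaussianReal (μ := 0) (v := 1)
    funext t
    have h := congrFun this t
    simpa [mgf] using h
  have step : ∀ (n : ℕ) (p p' : ℝ → ℝ), (∀ t, HasDerivAt p (p' t) t) →
      (fun t : ℝ => ∫ x : ℝ, x ^ n * Real.exp (t * x) ∂gaussianReal 0 1)
        = (fun t => p t * Real.exp (t ^ 2 / 2)) →
      (fun t : ℝ => ∫ x : ℝ, x ^ (n + 1) * Real.exp (t * x) ∂gaussianReal 0 1)
        = (fun t => (p' t + t * p t) * Real.exp (t ^ 2 / 2)) := by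
    intro n p p' hp h
    funext t
    have h1 := hd n t
    rw [h] at h1
    rw [h1.unique ((hp t).mul (hE t))]
    ring
  have h1 := step 0 (fun _ => 1) (fun _ => 0) (fun t => hasDerivAt_const t 1) (by simpa using h0)
  have h2 := step 1 (fun t => t) (fun _ => 1) (fun t => hasDerivAt_id t) (by simpa using h1)
  have h3 := step 2 (fun t => 1 + t * t) (fun t => 2 * t)
    (fun t => by
      convert! ((hasDerivAt_id t).mul (hasDerivAt_id t)).const_add 1 using 1
      simp; ring) (by simpa using h2)
  have h4 := step 3 (fun t => 2 * t + t * (1 + t * t)) (fun t => 3 + 3 * t ^ 2)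
    (fun t => by
      convert! ((hasDerivAt_id t).const_mul 2).add ((hasDerivAt_id t).mul
        (((hasDerivAt_id t).mul (hasDerivAt_id t)).const_add 1)) using 1
      simp; ring) (by simpa using h3)
  have := congrFun h4 0
  simpa using this

lemma norm_sum_smul_sq {E ι : Type*} [NormedAddCommGroup E] [InnerProductSpace ℝ E] [Fintype ι]
    (b : OrthonormalBasis ι ℝ E) (y : ι → ℝ) :
    ‖∑ i, y i • b i‖ ^ 2 = ∑ i, y i ^ 2 := by
  rw [← b.sum_sq_norm_inner_right]
  refine Finset.sum_congr rfl fun i _ => ?_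
  rw [b.orthonormal.inner_right_fintype]
  simp

section StdGaussianMoments

variable {E : Type*} [NormedAddCommGroup E] [InnerProductSpace ℝ E] [FiniteDimensional ℝ E]
  [MeasurableSpace E] [BorelSpace E]

lemma map_inner_stdGaussian (x : E) :
    (stdGaussian E).map (fun z => inner ℝ x z) = (gaussianReal 0 1).map (fun h => ‖x‖ * h) := by
  have h := IsGaussian.map_eq_gaussianReal (μ := stdGaussian E) (innerSL ℝ x)
  rw [integral_strongDual_stdGaussian, variance_dual_stdGaussian] at h
  rw [gaussianReal_map_const_mul]
  simp only [innerSL_apply_norm] at h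
  convert! h using 2
  · simp
  · ext; simp

lemma lintegral_inner_stdGaussian (x : E) {F : ℝ → ENNReal} (hF : Measurable F) :
    ∫⁻ z, F (inner ℝ x z) ∂stdGaussian E = ∫⁻ h, F (‖x‖ * h) ∂gaussianReal 0 1 := by
  have h := congrArg (fun m => ∫⁻ y, F y ∂m) (map_inner_stdGaussian x)
  rwa [lintegral_map hF (by fun_prop), lintegral_map hF (by fun_prop)] at h

lemma lintegral_exp_inner_stdGaussian (x : E) (t : ℝ) :
    ∫⁻ z, ENNReal.ofReal (Real.exp (t * inner ℝ x z)) ∂stdGaussian E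
      = ENNReal.ofReal (Real.exp (t ^ 2 * ‖x‖ ^ 2 / 2)) := by
  rw [lintegral_inner_stdGaussian x (F := fun y => ENNReal.ofReal (Real.exp (t * y)))
    (by fun_prop)]
  have h := congrFun (mgf_id_gaussianReal (μ := 0) (v := 1)) (t * ‖x‖)
  simp only [mgf, id, NNReal.coe_one, zero_mul, zero_add, one_mul] at h
  simp_rw [← mul_assoc]
  rw [← ofReal_integral_eq_lintegral_ofReal (integrable_exp_mul_gaussianReal _)
    (Filter.Eventually.of_forall fun x => by positivity), h]
  congr 2; ring

lemma lintegral_exp_sq_inner_stdGaussian_le (x : E) (hx : ‖x‖ ≤ 1) :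
    ∫⁻ z, ENNReal.ofReal (Real.exp (3 / 8 * inner ℝ x z ^ 2)) ∂stdGaussian E ≤ 2 := by
  rw [lintegral_inner_stdGaussian x (F := fun y => ENNReal.ofReal (Real.exp (3 / 8 * y ^ 2)))
    (by fun_prop)]
  have h := lintegral_exp_mul_sq_gaussianReal (s := 3 / 8) (by norm_num)
  have h2 : √(1 / (1 - 2 * (3 / 8 : ℝ))) = 2 := by
    rw [show (1 / (1 - 2 * (3 / 8 : ℝ))) = 2 ^ 2 by norm_num]; simp
  rw [h2] at h
  refine (lintegral_mono fun y => ENNReal.ofReal_le_ofReal (Real.exp_le_exp.2 ?_)).trans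
    (h.le.trans (by simp))
  have : ‖x‖ ^ 2 ≤ 1 := pow_le_one₀ (norm_nonneg _) hx
  have := mul_le_mul_of_nonneg_right this (sq_nonneg y)
  nlinarith

lemma lintegral_exp_norm_sq_stdGaussian_le {s : ℝ} (hs : |s| ≤ 1 / 4) :
    ∫⁻ z, ENNReal.ofReal (Real.exp (s * (‖z‖ ^ 2 - Module.finrank ℝ E))) ∂stdGaussian E
      ≤ ENNReal.ofReal (Real.exp (2 * s ^ 2 * Module.finrank ℝ E)) := by
  rw [stdGaussian_eq_map_pi_orthonormalBasis (stdOrthonormalBasis ℝ E),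
    lintegral_map (by fun_prop) (by fun_prop)]
  have h : ∀ y : Fin (Module.finrank ℝ E) → ℝ,
      ENNReal.ofReal (Real.exp (s * (‖∑ i, y i • stdOrthonormalBasis ℝ E i‖ ^ 2
        - Module.finrank ℝ E))) = ∏ i, ENNReal.ofReal (Real.exp (s * (y i ^ 2 - 1))) := by
    intro y
    rw [norm_sum_smul_sq, ← ENNReal.ofReal_prod_of_nonneg (fun i _ => by positivity),
      ← Real.exp_sum]
    simp [← Finset.mul_sum]
  simp_rw [h]
  rw [lintegral_pi_prod (fun _ => gaussianReal 0 1)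
    (fun _ y => ENNReal.ofReal (Real.exp (s * (y ^ 2 - 1)))) (fun _ => by fun_prop)]
  refine (Finset.prod_le_prod' fun i _ => lintegral_exp_mul_sq_sub_one_le hs).trans ?_
  rw [Finset.prod_const, ← ENNReal.ofReal_pow (by positivity), ← Real.exp_nat_mul]
  simp [mul_comm]

lemma integrable_pow_gaussianReal (n : ℕ) : Integrable (fun x : ℝ => x ^ n) (gaussianReal 0 1) :=
  integrable_pow_of_mem_interior_integrableExpSet (X := id) (by simp) n

lemma integral_sq_gaussianReal : ∫ x : ℝ, x ^ 2 ∂gaussianReal 0 1 = 1 := by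
  have h := variance_id_gaussianReal (μ := 0) (v := 1)
  rw [variance_eq_integral (by fun_prop)] at h
  simpa using h

lemma integral_centered_norm_sq_mul_inner_sq (x : E) :
    Integrable (fun z => (‖z‖ ^ 2 - Module.finrank ℝ E) * inner ℝ x z ^ 2) (stdGaussian E) ∧
    ∫ z, (‖z‖ ^ 2 - Module.finrank ℝ E) * inner ℝ x z ^ 2 ∂stdGaussian E = 2 * ‖x‖ ^ 2 := by
  classical
  rcases eq_or_ne x 0 with rfl | hx
  · simp
  obtain ⟨m, hm⟩ : ∃ m, Module.finrank ℝ E = m + 1 :=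
    Nat.exists_eq_succ_of_ne_zero (by
      have : Nontrivial E := ⟨⟨x, 0, hx⟩⟩
      exact (Module.finrank_pos (R := ℝ) (M := E)).ne')
  have hxn : ‖x‖ ≠ 0 := norm_ne_zero_iff.2 hx
  have ho : Orthonormal ℝ (({0} : Set (Fin (m + 1))).domRestrict fun _ => (‖x‖⁻¹ • x : E)) := by
    constructor
    · intro i
      rw [Set.domRestrict_apply, norm_smul, norm_inv, norm_norm, inv_mul_cancel₀ hxn]
    · intro i j hij
      exact absurd (Subsingleton.elim i j) hij
  obtain ⟨b, hb⟩ := ho.exists_orthonormalBasis_extension_of_card_eq (by simpa using hm)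
  have hb0 : x = ‖x‖ • b 0 := by
    rw [hb 0 rfl, smul_smul, mul_inv_cancel₀ hxn, one_smul]
  have key : ∀ y : Fin (m + 1) → ℝ,
      (‖∑ i, y i • b i‖ ^ 2 - Module.finrank ℝ E) * inner ℝ x (∑ i, y i • b i) ^ 2
        = ‖x‖ ^ 2 * ∑ i, (y i ^ 2 - 1) * y 0 ^ 2 := by
    intro y
    rw [norm_sum_smul_sq, hb0, inner_smul_left, b.orthonormal.inner_right_fintype, ← hb0, hm,
      ← Finset.sum_mul]
    simp
    ring
  have hint2 : Integrable (fun y : ℝ => y ^ 2 - 1) (gaussianReal 0 1) :=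
    (integrable_pow_gaussianReal 2).sub (integrable_const 1)
  have each : ∀ i : Fin (m + 1), Integrable (fun y : Fin (m + 1) → ℝ => (y i ^ 2 - 1) * y 0 ^ 2)
      (Measure.pi fun _ => gaussianReal 0 1) ∧
      ∫ y : Fin (m + 1) → ℝ, (y i ^ 2 - 1) * y 0 ^ 2 ∂(Measure.pi fun _ => gaussianReal 0 1)
        = if i = 0 then 2 else 0 := by
    intro i
    by_cases hi : i = 0
    · subst hi
      have h1 : Integrable (fun y : ℝ => (y ^ 2 - 1) * y ^ 2) (gaussianReal 0 1) := by
        refine ((integrable_pow_gaussianReal 4).sub (integrable_pow_gaussianReal 2)).congr ?_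
        exact Filter.Eventually.of_forall fun y => by simp; ring
      refine ⟨integrable_comp_eval (μ := fun _ : Fin (m + 1) => gaussianReal 0 1) (i := 0) h1, ?_⟩
      rw [integral_comp_eval (μ := fun _ : Fin (m + 1) => gaussianReal 0 1) (i := 0)
        (f := fun y : ℝ => (y ^ 2 - 1) * y ^ 2) h1.aestronglyMeasurable]
      simp_rw [sub_mul, one_mul, ← pow_add]
      rw [integral_sub (integrable_pow_gaussianReal 4) (integrable_pow_gaussianReal 2),
        integral_pow_four_gaussianReal, integral_sq_gaussianReal]
      norm_num
    · have hind := (iIndepFun_pi (μ := fun _ : Fin (m + 1) => gaussianReal 0 1)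
        (X := fun i (y : ℝ) => if i = 0 then y ^ 2 else y ^ 2 - 1)
        (fun i => by split_ifs <;> fun_prop)).indepFun hi
      simp only [hi, if_false, if_true] at hind
      have hi1 := integrable_comp_eval (μ := fun _ : Fin (m + 1) => gaussianReal 0 1) (i := i) hint2
      have hi2 := integrable_comp_eval (μ := fun _ : Fin (m + 1) => gaussianReal 0 1) (i := 0)
        (integrable_pow_gaussianReal 2)
      refine ⟨hind.integrable_mul hi1 hi2, ?_⟩
      rw [hind.integral_fun_mul_eq_mul_integral hi1.aestronglyMeasurable hi2.aestronglyMeasurable,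
        integral_comp_eval (μ := fun _ : Fin (m + 1) => gaussianReal 0 1) (i := i)
        (f := fun y : ℝ => y ^ 2 - 1) hint2.aestronglyMeasurable,
        integral_sub (integrable_pow_gaussianReal 2) (integrable_const 1),
        integral_sq_gaussianReal]
      simp [hi]
  have hcont : Continuous fun z : E => (‖z‖ ^ 2 - Module.finrank ℝ E) * inner ℝ x z ^ 2 := by
    fun_prop
  rw [stdGaussian_eq_map_pi_orthonormalBasis b]
  have hmeas : Measurable fun y : Fin (m + 1) → ℝ => ∑ i, y i • b i := by fun_prop
  constructor
  · rw [integrable_map_measure hcont.aestronglyMeasurable hmeas.aemeasurable]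
    refine Integrable.congr ((integrable_finsetSum Finset.univ fun i _ => (each i).1).const_mul
      (‖x‖ ^ 2)) (Filter.Eventually.of_forall fun y => ?_)
    simp only [Function.comp, key]
  · rw [integral_map hmeas.aemeasurable hcont.aestronglyMeasurable]
    simp_rw [key]
    rw [integral_const_mul, integral_finsetSum _ fun i _ => (each i).1]
    simp only [(each _).2]
    simp [mul_comm]

end StdGaussianMoments

lemma exp_le_one_add_add_sq_mul_exp (y : ℝ) :
    Real.exp y ≤ 1 + y + y ^ 2 * Real.exp (max y 0) := by
  have h1 := Real.add_one_le_exp y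
  rcases le_total y 0 with h | h
  · rw [max_eq_right h, Real.exp_zero]
    have h2 : Real.exp y * (1 - y) ≤ 1 := by
      have := Real.add_one_le_exp (-y)
      calc Real.exp y * (1 - y) ≤ Real.exp y * Real.exp (-y) := by gcongr; linarith
        _ = 1 := by rw [← Real.exp_add]; simp
    nlinarith
  · rw [max_eq_left h]
    have h2 : Real.exp y * (1 - y) ≤ 1 := by
      have := Real.add_one_le_exp (-y)
      calc Real.exp y * (1 - y) ≤ Real.exp y * Real.exp (-y) := by gcongr; linarith
        _ = 1 := by rw [← Real.exp_add]; simp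
    nlinarith [mul_le_mul_of_nonneg_left h2 h]

lemma integrable_and_integral_le {Ω : Type*} [MeasurableSpace Ω] {μ : Measure Ω} {f : Ω → ℝ}
    (hf : Measurable f) (h0 : ∀ x, 0 ≤ f x) {c : ℝ} (hc : 0 ≤ c)
    (h : ∫⁻ x, ENNReal.ofReal (f x) ∂μ ≤ ENNReal.ofReal c) :
    Integrable f μ ∧ ∫ x, f x ∂μ ≤ c := by
  have h1 : Integrable f μ := by
    refine ⟨hf.aestronglyMeasurable, ?_⟩
    rw [hasFiniteIntegral_iff_ofReal (Filter.Eventually.of_forall h0)]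
    exact h.trans_lt ENNReal.ofReal_lt_top
  refine ⟨h1, ?_⟩
  rw [← ofReal_integral_eq_lintegral_ofReal h1 (Filter.Eventually.of_forall h0)] at h
  exact (ENNReal.ofReal_le_ofReal_iff hc).1 h

lemma sq_mul_pow_four_mul_exp_le {α τ g n : ℝ} (hn : 0 < n) :
    (α + τ) ^ 2 * g ^ 4 * Real.exp (g ^ 2 / 8) ≤
      (256 * α ^ 2 + 98304 * n) * Real.exp (3 / 8 * g ^ 2)
        + 6144 * n * (Real.exp (1 / (4 * √n) * τ) + Real.exp (-(1 / (4 * √n)) * τ)) := by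
  have hs : 0 < √n := Real.sqrt_pos.2 hn
  have hsq : √n ^ 2 = n := Real.sq_sqrt hn.le
  set e := Real.exp (g ^ 2 / 8) with he
  have he1 : 1 ≤ e := Real.one_le_exp (by positivity)
  have he3 : Real.exp (3 / 8 * g ^ 2) = e ^ 3 := by
    rw [he, ← Real.exp_nat_mul]; congr 1; push_cast; ring
  have hg4 : g ^ 4 ≤ 128 * e := by
    have := Real.pow_div_factorial_le_exp (g ^ 2 / 8) (by positivity) 2
    norm_num [Nat.factorial] at this
    rw [he]; nlinarith
  have hg8 : g ^ 8 ≤ 98304 * e := by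
    have := Real.pow_div_factorial_le_exp (g ^ 2 / 8) (by positivity) 4
    norm_num [Nat.factorial] at this
    rw [he]; nlinarith
  set w := 1 / (4 * √n) * τ with hw
  have hτ : τ = 4 * √n * w := by rw [hw]; field_simp
  have hw4 : w ^ 4 ≤ 24 * (Real.exp w + Real.exp (-w)) := by
    have := Real.pow_div_factorial_le_exp |w| (abs_nonneg w) 4
    norm_num [Nat.factorial] at this
    have h4 : |w| ^ 4 = w ^ 4 := by rw [pow_abs]; exact abs_of_nonneg (by positivity)
    have h5 : Real.exp |w| ≤ Real.exp w + Real.exp (-w) := by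
      rcases abs_cases w with h | h <;> rw [h.1] <;> nlinarith [Real.exp_pos w, Real.exp_pos (-w)]
    rw [h4] at this
    linarith
  have hτ4 : τ ^ 4 ≤ n * (6144 * n * (Real.exp w + Real.exp (-w))) := by
    have : τ ^ 4 = 256 * (√n ^ 2) ^ 2 * w ^ 4 := by rw [hτ]; ring
    rw [this, hsq]
    nlinarith [mul_le_mul_of_nonneg_left hw4 (show 0 ≤ 256 * n ^ 2 by positivity)]
  have hneg : -(1 / (4 * √n)) * τ = -w := by rw [hw]; ring
  rw [hneg, he3]
  have a1 : (α + τ) ^ 2 * g ^ 4 * e ≤ 2 * α ^ 2 * (g ^ 4 * e) + 2 * τ ^ 2 * g ^ 4 * e := by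
    have : 0 ≤ (α - τ) ^ 2 * (g ^ 4 * e) := by positivity
    nlinarith
  have a2 : g ^ 4 * e ≤ 128 * e ^ 3 := by
    calc g ^ 4 * e ≤ (128 * e) * e := by gcongr
      _ ≤ 128 * e ^ 3 := by nlinarith [sq_nonneg e]
  have a3 : 2 * τ ^ 2 * g ^ 4 * e ≤ τ ^ 4 / n + n * g ^ 8 * e ^ 2 := by
    have h : 0 ≤ (τ ^ 2 - n * g ^ 4 * e) ^ 2 / n := by positivity
    have h2 : (τ ^ 2 - n * g ^ 4 * e) ^ 2 / n
        = τ ^ 4 / n + n * g ^ 8 * e ^ 2 - 2 * τ ^ 2 * g ^ 4 * e := by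
      field_simp; ring
    linarith
  have a4 : τ ^ 4 / n ≤ 6144 * n * (Real.exp w + Real.exp (-w)) := by
    rw [div_le_iff₀ hn]; linarith
  have a5 : n * g ^ 8 * e ^ 2 ≤ 98304 * n * e ^ 3 := by
    calc n * g ^ 8 * e ^ 2 ≤ n * (98304 * e) * e ^ 2 := by gcongr
      _ = _ := by ring
  have a6 := mul_le_mul_of_nonneg_left a2 (show 0 ≤ 2 * α ^ 2 by positivity)
  linarith

section TruncatedExponentialMoments

variable {E : Type*} [NormedAddCommGroup E] [InnerProductSpace ℝ E] [FiniteDimensional ℝ E]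
  [MeasurableSpace E] [BorelSpace E]

lemma integral_inner_sq (x : E) :
    Integrable (fun z => inner ℝ x z ^ 2) (stdGaussian E) ∧
    ∫ z, inner ℝ x z ^ 2 ∂stdGaussian E = ‖x‖ ^ 2 := by
  have hm : Measurable fun z : E => (inner ℝ x z : ℝ) := by fun_prop
  have h := map_inner_stdGaussian x
  have hi : Integrable (fun y : ℝ => y ^ 2) ((stdGaussian E).map fun z => inner ℝ x z) := by
    rw [h, integrable_map_measure (by fun_prop) (by fun_prop)]
    simp only [Function.comp_def, mul_pow]
    exact (integrable_pow_gaussianReal 2).const_mul _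
  constructor
  · exact (integrable_map_measure (f := fun z : E => (inner ℝ x z : ℝ)) (by fun_prop)
      (by fun_prop)).1 hi
  · have : ∫ z, inner ℝ x z ^ 2 ∂stdGaussian E
        = ∫ y, y ^ 2 ∂((stdGaussian E).map fun z => inner ℝ x z) := by
      rw [integral_map (by fun_prop) (by fun_prop)]
    rw [this, h, integral_map (by fun_prop) (by fun_prop)]
    simp only [mul_pow]
    rw [integral_const_mul, integral_sq_gaussianReal, mul_one]

lemma integral_affine_combination {X : Type*} [MeasurableSpace X] {μ : Measure X}
    [IsProbabilityMeasure μ] {f g h k l : X → ℝ} (hf : Integrable f μ) (hg : Integrable g μ)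
    (hh : Integrable h μ) (hk : Integrable k μ) (hl : Integrable l μ) (a b c d e : ℝ)
    {If Ig : ℝ} (hIf : ∫ x, f x ∂μ = If) (hIg : ∫ x, g x ∂μ = Ig) :
    ∫ x, ((1 + a * (b * f x + g x)) + c * (d * h x + e * (k x + l x))) ∂μ
      = (1 + a * (b * If + Ig)) + c * (d * ∫ x, h x ∂μ + e * (∫ x, k x ∂μ + ∫ x, l x ∂μ)) := by
  have h1 : Integrable (fun x => b * f x) μ := hf.const_mul b
  have h2 : Integrable (fun x => a * (b * f x + g x)) μ := (h1.add hg).const_mul a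
  have h3 : Integrable (fun x => 1 + a * (b * f x + g x)) μ := (integrable_const 1).add h2
  have h4 : Integrable (fun x => e * (k x + l x)) μ := (hk.add hl).const_mul e
  have h5 : Integrable (fun x => d * h x) μ := hh.const_mul d
  have h6 : Integrable (fun x => c * (d * h x + e * (k x + l x))) μ := (h5.add h4).const_mul c
  rw [integral_add h3 h6, integral_add (integrable_const 1) h2, integral_const_mul,
    integral_add h1 hg, integral_const_mul, integral_const_mul, integral_add h5 h4,
    integral_const_mul, integral_const_mul, integral_add hk hl, hIf, hIg]
  simp

/-- Exponential moments of `ε (α + ‖z‖² - dim) ⟨x, z⟩²`, truncated from one side only. -/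
lemma lintegral_exp_quadratic_le {n α R s ε : ℝ} {x : E} (hn : 1 ≤ n)
    (hE : (Module.finrank ℝ E : ℝ) ≤ n) (hx : ‖x‖ ≤ 1) (hR : 0 ≤ R) (hs : 0 ≤ s)
    (hsR : s * R ≤ 1 / 8) (hε : ε ^ 2 = 1) :
    ∫⁻ z, {z : E | ε * (α + (‖z‖ ^ 2 - Module.finrank ℝ E)) ≤ R}.indicator
        (fun z => ENNReal.ofReal (Real.exp
          (s * ε * ((α + (‖z‖ ^ 2 - Module.finrank ℝ E)) * inner ℝ x z ^ 2)))) z ∂stdGaussian E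
      ≤ ENNReal.ofReal (Real.exp
          (s * ε * (‖x‖ ^ 2 * (α + 2)) + 300000 * s ^ 2 * (α ^ 2 + n))) := by
  set D : ℝ := ((Module.finrank ℝ E : ℕ) : ℝ) with hD
  have hn0 : 0 < n := by linarith
  have hsn : 1 ≤ √n := Real.one_le_sqrt.2 hn
  have hD0 : 0 ≤ D := Nat.cast_nonneg _
  obtain ⟨i1, e1⟩ := integrable_and_integral_le (μ := stdGaussian E)
    (f := fun z => Real.exp (3 / 8 * inner ℝ x z ^ 2)) (by fun_prop) (fun _ => by positivity)
    (c := 2) (by norm_num) (by simpa using lintegral_exp_sq_inner_stdGaussian_le x hx)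
  have hw : |1 / (4 * √n)| ≤ 1 / 4 := by
    rw [abs_of_pos (by positivity)]
    exact one_div_le_one_div_of_le (by norm_num) (by linarith)
  have hexp : Real.exp (2 * (1 / (4 * √n)) ^ 2 * D) ≤ 2 := by
    have h1 : 2 * (1 / (4 * √n)) ^ 2 * D ≤ 1 / 8 := by
      rw [div_pow, mul_pow, Real.sq_sqrt hn0.le, one_pow]
      rw [show 2 * (1 / (4 ^ 2 * n)) * D = D / (8 * n) by field_simp; ring]
      rw [div_le_iff₀ (by positivity)]; linarith
    have h2 : Real.exp (1 / 8) ≤ 2 := by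
      have h3 := Real.add_one_le_exp (-(1 / 8) : ℝ)
      rw [Real.exp_neg] at h3
      have h4 : (1 : ℝ) / 2 ≤ (Real.exp (1 / 8))⁻¹ := by linarith
      have := inv_anti₀ (by norm_num) h4
      simpa using this
    exact (Real.exp_le_exp.2 h1).trans h2
  have hexp' : Real.exp (2 * (-(1 / (4 * √n))) ^ 2 * D) ≤ 2 := by rwa [neg_sq]
  obtain ⟨i2, e2⟩ := integrable_and_integral_le (μ := stdGaussian E)
    (f := fun z => Real.exp (1 / (4 * √n) * (‖z‖ ^ 2 - D))) (by fun_prop)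
    (fun _ => by positivity) (c := 2) (by norm_num)
    ((lintegral_exp_norm_sq_stdGaussian_le hw).trans (ENNReal.ofReal_le_ofReal hexp))
  obtain ⟨i3, e3⟩ := integrable_and_integral_le (μ := stdGaussian E)
    (f := fun z => Real.exp (-(1 / (4 * √n)) * (‖z‖ ^ 2 - D))) (by fun_prop)
    (fun _ => by positivity) (c := 2) (by norm_num)
    ((lintegral_exp_norm_sq_stdGaussian_le (by rwa [abs_neg])).trans
      (ENNReal.ofReal_le_ofReal hexp'))
  obtain ⟨i4, e4⟩ := integral_inner_sq x
  obtain ⟨i5, e5⟩ := integral_centered_norm_sq_mul_inner_sq x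
  rw [← hD] at e5 i5
  set P : E → ℝ := fun z => (1 + s * ε * (α * inner ℝ x z ^ 2 + (‖z‖ ^ 2 - D) * inner ℝ x z ^ 2))
    + s ^ 2 * ((256 * α ^ 2 + 98304 * n) * Real.exp (3 / 8 * inner ℝ x z ^ 2)
        + 6144 * n * (Real.exp (1 / (4 * √n) * (‖z‖ ^ 2 - D))
          + Real.exp (-(1 / (4 * √n)) * (‖z‖ ^ 2 - D)))) with hP
  have hpt : ∀ z, {z : E | ε * (α + (‖z‖ ^ 2 - D)) ≤ R}.indicator
      (fun z => Real.exp (s * ε * ((α + (‖z‖ ^ 2 - D)) * inner ℝ x z ^ 2))) z ≤ P z := by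
    intro z
    set τ := ‖z‖ ^ 2 - D
    set g : ℝ := inner ℝ x z
    have hq := sq_mul_pow_four_mul_exp_le (α := α) (τ := τ) (g := g) hn0
    have hq0 : 0 ≤ (α + τ) ^ 2 * g ^ 4 * Real.exp (g ^ 2 / 8) := by positivity
    have hq' := mul_le_mul_of_nonneg_left hq (sq_nonneg s)
    have hq0' := mul_nonneg (sq_nonneg s) hq0
    by_cases hz : z ∈ {z : E | ε * (α + (‖z‖ ^ 2 - D)) ≤ R}
    · rw [Set.indicator_of_mem hz]
      have hz' : ε * (α + τ) ≤ R := hz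
      refine (exp_le_one_add_add_sq_mul_exp _).trans ?_
      have hm : max (s * ε * ((α + τ) * g ^ 2)) 0 ≤ g ^ 2 / 8 := by
        refine max_le ?_ (by positivity)
        calc s * ε * ((α + τ) * g ^ 2) = s * g ^ 2 * (ε * (α + τ)) := by ring
          _ ≤ s * g ^ 2 * R := by gcongr
          _ = (s * R) * g ^ 2 := by ring
          _ ≤ 1 / 8 * g ^ 2 := by gcongr
          _ = _ := by ring
      have h2 : (s * ε * ((α + τ) * g ^ 2)) ^ 2 * Real.exp (max (s * ε * ((α + τ) * g ^ 2)) 0)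
          ≤ (s * ε * ((α + τ) * g ^ 2)) ^ 2 * Real.exp (g ^ 2 / 8) := by gcongr
      have h3 : (s * ε * ((α + τ) * g ^ 2)) ^ 2 * Real.exp (g ^ 2 / 8)
          = ε ^ 2 * (s ^ 2 * ((α + τ) ^ 2 * g ^ 4 * Real.exp (g ^ 2 / 8))) := by ring
      rw [h3, hε] at h2
      simp only [hP]
      linarith
    · rw [Set.indicator_of_notMem hz]
      have hz' : R < ε * (α + τ) := not_le.1 hz
      have : 0 ≤ s * g ^ 2 * (ε * (α + τ)) := by
        have : 0 ≤ ε * (α + τ) := by linarith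
        positivity
      simp only [hP]
      linarith
  have hPi : Integrable P (stdGaussian E) :=
    ((integrable_const 1).add (((i4.const_mul α).add i5).const_mul (s * ε))).add
      (((i1.const_mul _).add ((i2.add i3).const_mul _)).const_mul _)
  have hP0 : ∀ z, 0 ≤ P z := fun z =>
    (Set.indicator_nonneg (fun _ _ => Real.exp_nonneg _) z).trans (hpt z)
  have hPint : ∫ z, P z ∂stdGaussian E ≤
      1 + (s * ε * (‖x‖ ^ 2 * (α + 2)) + 300000 * s ^ 2 * (α ^ 2 + n)) := by
    have hcalc : ∫ z, P z ∂stdGaussian E = (1 + s * ε * (α * ‖x‖ ^ 2 + 2 * ‖x‖ ^ 2))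
        + s ^ 2 * ((256 * α ^ 2 + 98304 * n) * ∫ z, Real.exp (3 / 8 * inner ℝ x z ^ 2) ∂stdGaussian E
        + 6144 * n * (∫ z, Real.exp (1 / (4 * √n) * (‖z‖ ^ 2 - D)) ∂stdGaussian E
          + ∫ z, Real.exp (-(1 / (4 * √n)) * (‖z‖ ^ 2 - D)) ∂stdGaussian E)) := by
      simp only [hP]
      exact integral_affine_combination i4 i5 i1 i2 i3 _ _ _ _ _ e4 e5
    rw [hcalc]
    have b1 : (256 * α ^ 2 + 98304 * n) * ∫ z, Real.exp (3 / 8 * inner ℝ x z ^ 2) ∂stdGaussian E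
        ≤ (256 * α ^ 2 + 98304 * n) * 2 := by gcongr
    have b2 : 6144 * n * (∫ z, Real.exp (1 / (4 * √n) * (‖z‖ ^ 2 - D)) ∂stdGaussian E
          + ∫ z, Real.exp (-(1 / (4 * √n)) * (‖z‖ ^ 2 - D)) ∂stdGaussian E)
        ≤ 6144 * n * (2 + 2) := by gcongr
    have b3 : (256 * α ^ 2 + 98304 * n) * 2 + 6144 * n * (2 + 2) ≤ 300000 * (α ^ 2 + n) := by
      nlinarith [sq_nonneg α]
    have b4 := mul_le_mul_of_nonneg_left (add_le_add b1 b2 |>.trans b3) (sq_nonneg s)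
    linarith
  calc _ ≤ ∫⁻ z, ENNReal.ofReal (P z) ∂stdGaussian E := by
        refine lintegral_mono fun z => ?_
        have := ENNReal.ofReal_le_ofReal (hpt z)
        by_cases hz : z ∈ {z : E | ε * (α + (‖z‖ ^ 2 - D)) ≤ R}
        · rw [Set.indicator_of_mem hz] at this ⊢
          exact this
        · rw [Set.indicator_of_notMem hz]
          exact zero_le
    _ = ENNReal.ofReal (∫ z, P z ∂stdGaussian E) :=
        (ofReal_integral_eq_lintegral_ofReal hPi (Filter.Eventually.of_forall hP0)).symm
    _ ≤ _ := by
        refine ENNReal.ofReal_le_ofReal (hPint.trans ?_)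
        have := Real.add_one_le_exp
          (s * ε * (‖x‖ ^ 2 * (α + 2)) + 300000 * s ^ 2 * (α ^ 2 + n))
        linarith

/-- Exponential moments of `b (‖z‖² - dim + α) ⟨x, z⟩`, truncated symmetrically. -/
lemma lintegral_exp_linear_le {α R b : ℝ} {x : E} (hx : ‖x‖ ≤ 1) :
    ∫⁻ z, {z : E | |α + (‖z‖ ^ 2 - Module.finrank ℝ E)| ≤ R}.indicator
        (fun z => ENNReal.ofReal (Real.exp
          (b * ((α + (‖z‖ ^ 2 - Module.finrank ℝ E)) * inner ℝ x z)))) z ∂stdGaussian E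
      ≤ ENNReal.ofReal (Real.exp (b ^ 2 * R ^ 2 / 2)) := by
  set W : E → ℝ := fun z => α + (‖z‖ ^ 2 - Module.finrank ℝ E) with hW
  set G : Set E := {z : E | |W z| ≤ R}
  have hGm : MeasurableSet G := measurableSet_le (by fun_prop) (by fun_prop)
  set F : E → ENNReal := G.indicator
    (fun z => ENNReal.ofReal (Real.exp (b * (W z * inner ℝ x z)))) with hF
  have hFm : Measurable F := Measurable.indicator (by fun_prop) hGm
  have hneg : ∫⁻ z, F (-z) ∂stdGaussian E = ∫⁻ z, F z ∂stdGaussian E := by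
    have h := stdGaussian_map (LinearIsometryEquiv.neg ℝ (E := E))
    conv_rhs => rw [← h]
    rw [lintegral_map hFm (by fun_prop)]
    simp
  have hpt : ∀ z, F z + F (-z) ≤ ENNReal.ofReal (Real.exp (b * R * inner ℝ x z))
      + ENNReal.ofReal (Real.exp (-(b * R) * inner ℝ x z)) := by
    intro z
    have hWn : W (-z) = W z := by simp [hW]
    by_cases hz : z ∈ G
    · have hz' : -z ∈ G := by change |W (-z)| ≤ R; rw [hWn]; exact hz
      have hz2 : |W z| ≤ R := hz
      simp only [hF, Set.indicator_of_mem hz, Set.indicator_of_mem hz', hWn]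
      rw [← ENNReal.ofReal_add (by positivity) (by positivity),
        ← ENNReal.ofReal_add (by positivity) (by positivity)]
      apply ENNReal.ofReal_le_ofReal
      have h1 : |b * (W z * inner ℝ x z)| ≤ |b * R * inner ℝ x z| := by
        simp only [abs_mul]
        rw [mul_assoc]
        exact mul_le_mul_of_nonneg_left (mul_le_mul_of_nonneg_right
          (hz2.trans (le_abs_self R)) (abs_nonneg _)) (abs_nonneg _)
      have h2 := Real.cosh_le_cosh.2 h1
      rw [Real.cosh_eq, Real.cosh_eq] at h2
      have e1 : b * (W z * inner ℝ x (-z)) = -(b * (W z * inner ℝ x z)) := by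
        rw [inner_neg_right]; ring
      have e2 : -(b * R) * inner ℝ x z = -(b * R * inner ℝ x z) := by ring
      rw [e1, e2]
      linarith
    · have hz' : -z ∉ G := by
        intro h; apply hz
        have h2 : |W (-z)| ≤ R := h
        rw [hWn] at h2; exact h2
      simp [hF, Set.indicator_of_notMem hz, Set.indicator_of_notMem hz']
  have hsum : ∫⁻ z, F z ∂stdGaussian E + ∫⁻ z, F z ∂stdGaussian E
      ≤ ENNReal.ofReal (Real.exp (b ^ 2 * R ^ 2 / 2)) +
        ENNReal.ofReal (Real.exp (b ^ 2 * R ^ 2 / 2)) := by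
    have hle : (b * R) ^ 2 * ‖x‖ ^ 2 / 2 ≤ b ^ 2 * R ^ 2 / 2 := by
      have : ‖x‖ ^ 2 ≤ 1 := pow_le_one₀ (norm_nonneg _) hx
      nlinarith [mul_le_mul_of_nonneg_left this (sq_nonneg (b * R))]
    calc _ = ∫⁻ z, (F z + F (-z)) ∂stdGaussian E := by
          rw [lintegral_add_left hFm, hneg]
      _ ≤ ∫⁻ z, (ENNReal.ofReal (Real.exp (b * R * inner ℝ x z))
          + ENNReal.ofReal (Real.exp (-(b * R) * inner ℝ x z))) ∂stdGaussian E :=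
          lintegral_mono hpt
      _ = ENNReal.ofReal (Real.exp ((b * R) ^ 2 * ‖x‖ ^ 2 / 2)) +
          ENNReal.ofReal (Real.exp ((b * R) ^ 2 * ‖x‖ ^ 2 / 2)) := by
          rw [lintegral_add_left (by fun_prop), lintegral_exp_inner_stdGaussian,
            lintegral_exp_inner_stdGaussian, neg_sq]
      _ ≤ _ := by gcongr
  rw [← two_mul, ← two_mul] at hsum
  exact (ENNReal.mul_le_mul_iff_right (by simp) (by simp)).1 hsum

end TruncatedExponentialMoments

/-- The unit ball has a `1/2`-net of size at most `5 ^ dim`. -/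
lemma exists_finset_half_net (E : Type*) [NormedAddCommGroup E] [InnerProductSpace ℝ E]
    [FiniteDimensional ℝ E] : ∃ P : Finset E, P.card ≤ 5 ^ Module.finrank ℝ E ∧
      (∀ p ∈ P, ‖p‖ ≤ 1) ∧ ∀ x : E, ‖x‖ ≤ 1 → ∃ p ∈ P, ‖x - p‖ ≤ 1 / 2 := by
  classical
  let sep : Finset E → Prop := fun s =>
    (∀ c ∈ s, ‖c‖ ≤ 2) ∧ ∀ c ∈ s, ∀ d ∈ s, c ≠ d → 1 ≤ ‖c - d‖
  have hbound : ∀ s, sep s → s.card ≤ 5 ^ Module.finrank ℝ E := fun s hs =>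
    Besicovitch.card_le_of_separated s hs.1 hs.2
  let K : ℕ → Prop := fun k => ∃ s, sep s ∧ s.card = k
  have hK0 : K 0 := ⟨∅, ⟨by simp, by simp⟩, rfl⟩
  obtain ⟨s, hs, hsc⟩ : K (Nat.findGreatest K (5 ^ Module.finrank ℝ E)) :=
    Nat.findGreatest_spec (Nat.zero_le _) hK0
  refine ⟨s.image fun x => (1 / 2 : ℝ) • x, Finset.card_image_le.trans (hbound s hs), ?_, ?_⟩
  · intro p hp
    obtain ⟨c, hc, rfl⟩ := Finset.mem_image.1 hp
    rw [norm_smul]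
    have := hs.1 c hc
    norm_num
    linarith
  · intro x hx
    by_contra! hcon
    have hfar : ∀ c ∈ s, 1 < ‖(2 : ℝ) • x - c‖ := by
      intro c hc
      have h1 := hcon _ (Finset.mem_image_of_mem _ hc)
      have h2 : (2 : ℝ) • x - c = (2 : ℝ) • (x - (1 / 2 : ℝ) • c) := by
        rw [smul_sub, smul_smul]; norm_num
      rw [h2, norm_smul]
      norm_num
      linarith
    have hns : (2 : ℝ) • x ∉ s := fun h => by
      have := hfar _ h
      rw [sub_self, norm_zero] at this
      linarith
    have hsep : sep (insert ((2 : ℝ) • x) s) := by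
      refine ⟨?_, ?_⟩
      · intro c hc
        rcases Finset.mem_insert.1 hc with rfl | hc
        · rw [norm_smul]; norm_num; linarith
        · exact hs.1 c hc
      · intro c hc d hd hcd
        rcases Finset.mem_insert.1 hc with rfl | hc <;> rcases Finset.mem_insert.1 hd with rfl | hd
        · exact absurd rfl hcd
        · exact (hfar d hd).le
        · rw [norm_sub_rev]; exact (hfar c hc).le
        · exact hs.2 c hc d hd hcd
    have hcard := hbound _ hsep
    have h1 := Nat.le_findGreatest (P := K) hcard ⟨_, hsep, rfl⟩
    rw [Finset.card_insert_of_notMem hns] at h1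
    omega

/-- A finite subset of the unit ball on which quadratic and linear forms are controlled. -/
lemma exists_finset_test_vectors (E : Type*) [NormedAddCommGroup E] [InnerProductSpace ℝ E]
    [FiniteDimensional ℝ E] : ∃ P : Finset E, P.card ≤ 2 * 25 ^ Module.finrank ℝ E ∧
      (∀ p ∈ P, ‖p‖ ≤ 1) ∧
      (∀ (A : E →ₗ[ℝ] E) (m : ℝ), A.IsSymmetric → (∀ p ∈ P, |inner ℝ p (A p)| ≤ m) →
        ∀ x, ‖A x‖ ≤ 8 * m * ‖x‖) ∧
      ∀ (r : E) (m : ℝ), (∀ p ∈ P, inner ℝ p r ≤ m) → ‖r‖ ≤ 2 * m := by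
  classical
  obtain ⟨P, hcard, hball, hnet⟩ := exists_finset_half_net E
  have hlin : ∀ (r : E) (m : ℝ), (∀ p ∈ P, inner ℝ p r ≤ m) → ‖r‖ ≤ 2 * m := by
    intro r m hm
    by_cases hr : r = 0
    · obtain ⟨p, hp, -⟩ := hnet 0 (by simp)
      have := hm p hp
      rw [hr, inner_zero_right] at this
      rw [hr, norm_zero]; linarith
    have hr0 : 0 < ‖r‖ := norm_pos_iff.2 hr
    obtain ⟨p, hp, hpx⟩ := hnet (‖r‖⁻¹ • r) (by rw [norm_smul, norm_inv, norm_norm,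
      inv_mul_cancel₀ hr0.ne'])
    have h1 : inner ℝ (‖r‖⁻¹ • r) r = ‖r‖ := by
      rw [real_inner_smul_left, real_inner_self_eq_norm_sq]; field_simp
    have h2 : inner ℝ (‖r‖⁻¹ • r - p) r ≤ 1 / 2 * ‖r‖ :=
      (real_inner_le_norm _ _).trans (by gcongr)
    rw [inner_sub_left, h1] at h2
    linarith [hm p hp]
  let f : E × E → E := fun q => (1 / 2 : ℝ) • (q.1 + q.2)
  let g : E × E → E := fun q => (1 / 2 : ℝ) • (q.1 - q.2)
  have hsub : ∀ p ∈ P, p ∈ (P ×ˢ P).image f ∪ (P ×ˢ P).image g := fun p hp =>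
    Finset.mem_union_left _ (Finset.mem_image.2 ⟨(p, p), by simp [hp], by
      simp only [f]; rw [← two_smul ℝ p, smul_smul]; norm_num⟩)
  refine ⟨(P ×ˢ P).image f ∪ (P ×ˢ P).image g, ?_, ?_, ?_, fun r m hm => hlin r m fun p hp =>
    hm p (hsub p hp)⟩
  · calc _ ≤ (P ×ˢ P).card + (P ×ˢ P).card :=
        (Finset.card_union_le _ _).trans (add_le_add Finset.card_image_le Finset.card_image_le)
      _ ≤ 2 * 25 ^ Module.finrank ℝ E := by
        rw [Finset.card_product, show (25 : ℕ) = 5 * 5 by norm_num, mul_pow]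
        have := Nat.mul_le_mul hcard hcard
        omega
  · intro p hp
    rcases Finset.mem_union.1 hp with hp | hp <;> obtain ⟨q, hq, rfl⟩ := Finset.mem_image.1 hp <;>
      rw [Finset.mem_product] at hq <;> have h1 := hball _ hq.1 <;> have h2 := hball _ hq.2
    · have := norm_add_le q.1 q.2
      simp only [f, norm_smul]; norm_num; linarith
    · have := norm_sub_le q.1 q.2
      simp only [g, norm_smul]; norm_num; linarith
  · intro A m hA hm
    have hbil : ∀ x ∈ P, ∀ y ∈ P, inner ℝ x (A y) ≤ 2 * m := by
      intro x hx y hy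
      have h1 := hm (f (x, y)) (Finset.mem_union_left _ (Finset.mem_image_of_mem _ (by simp [*])))
      have h2 := hm (g (x, y)) (Finset.mem_union_right _ (Finset.mem_image_of_mem _ (by simp [*])))
      have h3 : inner ℝ x (A y) = inner ℝ (f (x, y)) (A (f (x, y)))
          - inner ℝ (g (x, y)) (A (g (x, y))) := by
        have h4 : inner ℝ y (A x) = inner ℝ x (A y) := by
          rw [← hA y x, real_inner_comm]
        simp only [f, g, map_smul, map_add, map_sub, real_inner_smul_left, real_inner_smul_right,
          inner_add_left, inner_add_right, inner_sub_left, inner_sub_right, h4]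
        ring
      rw [h3]
      linarith [le_abs_self (inner ℝ (f (x, y)) (A (f (x, y)))),
        neg_abs_le (inner ℝ (g (x, y)) (A (g (x, y))))]
    have hy : ∀ y ∈ P, ‖A y‖ ≤ 4 * m := fun y hy =>
      (hlin (A y) (2 * m) fun x hx => hbil x hx y hy).trans (by linarith)
    have hm0 : 0 ≤ m := by
      obtain ⟨p, hp, -⟩ := hnet 0 (by simp)
      exact (abs_nonneg _).trans (hm p (hsub p hp))
    set B : E →L[ℝ] E := LinearMap.toContinuousLinearMap A
    have hBA : ∀ x, B x = A x := fun x => rfl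
    have hB : ‖B‖ ≤ 4 * m + ‖B‖ * (1 / 2) := by
      refine ContinuousLinearMap.opNorm_le_of_unit_norm (by positivity) fun x hx => ?_
      obtain ⟨p, hp, hpx⟩ := hnet x hx.le
      calc ‖B x‖ = ‖B p + B (x - p)‖ := by rw [← map_add]; congr 2; abel
        _ ≤ ‖B p‖ + ‖B (x - p)‖ := norm_add_le _ _
        _ ≤ 4 * m + ‖B‖ * (1 / 2) := add_le_add (hy p hp)
            ((B.le_opNorm _).trans (by gcongr))
    intro x
    rw [← hBA]
    exact (B.le_opNorm x).trans (by gcongr; linarith)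

section NoiseEvents

variable {E : Type*} [NormedAddCommGroup E] [InnerProductSpace ℝ E]

/-- The deviation of the squared norm of a standard Gaussian vector from its mean. -/
noncomputable def excess (z : E) : ℝ := ‖z‖ ^ 2 - Module.finrank ℝ E

lemma continuous_excess : Continuous (excess : E → ℝ) := by
  unfold excess; fun_prop

variable [MeasurableSpace E] [BorelSpace E]

@[fun_prop]
lemma measurable_excess : Measurable (excess : E → ℝ) := continuous_excess.measurable

variable [FiniteDimensional ℝ E] {ι : Type*} [Fintype ι]

/-- Weighted sums of the excesses concentrate. -/
lemma measure_pi_abs_sum_mul_excess_le {s t : ℝ} (a : ι → ℝ) (ha : ∀ i, |s * a i| ≤ 1 / 4) :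
    Measure.pi (fun _ : ι => stdGaussian E) {z | t < |s * ∑ i, a i * excess (z i)|}
      ≤ 2 * ENNReal.ofReal (Real.exp (2 * s ^ 2 * Module.finrank ℝ E * ∑ i, a i ^ 2 - t)) := by
  have key : ∀ σ : ℝ, |σ| = 1 →
      Measure.pi (fun _ : ι => stdGaussian E) {z | (∀ i, z i ∈ (Set.univ : Set E)) ∧
        t ≤ ∑ i, σ * s * a i * excess (z i)}
      ≤ ENNReal.ofReal (Real.exp (2 * s ^ 2 * Module.finrank ℝ E * ∑ i, a i ^ 2 - t)) := by
    intro σ hσ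
    have hσ2 : σ ^ 2 = 1 := by rw [← sq_abs, hσ, one_pow]
    refine (measure_pi_le_sum_le (fun _ : ι => stdGaussian E)
      (fun i z => σ * s * a i * excess z) (fun i => by fun_prop) (fun _ => Set.univ)
      (fun _ => MeasurableSet.univ) (fun i => 2 * (σ * s * a i) ^ 2 * Module.finrank ℝ E) t
      fun i => ?_).trans ?_
    · simp only [Set.indicator_univ]
      refine lintegral_exp_norm_sq_stdGaussian_le ?_
      rw [mul_assoc, abs_mul, hσ, one_mul]; exact ha i
    · apply le_of_eq
      congr 3
      rw [Finset.mul_sum]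
      refine Finset.sum_congr rfl fun i _ => ?_
      rw [mul_pow, mul_pow, hσ2]; ring
  refine (measure_mono (t := _ ∪ _) ?_).trans ((measure_union_le _ _).trans
    ((add_le_add (key 1 (by simp)) (key (-1) (by simp))).trans (two_mul _).symm.le))
  intro z hz
  have hz' : t < |s * ∑ i, a i * excess (z i)| := hz
  have e : ∀ σ : ℝ, ∑ i, σ * s * a i * excess (z i) = σ * (s * ∑ i, a i * excess (z i)) := by
    intro σ
    rw [Finset.mul_sum, Finset.mul_sum]
    exact Finset.sum_congr rfl fun i _ => by ring
  rcases lt_abs.1 hz' with h | h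
  · left
    refine ⟨fun _ => trivial, ?_⟩
    rw [e]; linarith
  · right
    refine ⟨fun _ => trivial, ?_⟩
    rw [e]; linarith

/-- All excesses are simultaneously small. -/
lemma measure_pi_exists_abs_excess_le {s t : ℝ} (hs : 0 < s) (hs' : s ≤ 1 / 4) :
    Measure.pi (fun _ : ι => stdGaussian E) {z | ∃ i, t < |excess (z i)|}
      ≤ Fintype.card ι *
        (2 * ENNReal.ofReal (Real.exp (2 * s ^ 2 * Module.finrank ℝ E - s * t))) := by
  classical
  rw [← nsmul_eq_mul, ← Finset.card_univ, ← Finset.sum_const]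
  have : {z : ι → E | ∃ i, t < |excess (z i)|} = ⋃ i ∈ (Finset.univ : Finset ι),
      {z : ι → E | t < |excess (z i)|} := by ext; simp
  rw [this]
  refine (measure_biUnion_finset_le _ _).trans (Finset.sum_le_sum fun j _ => ?_)
  have h := measure_pi_abs_sum_mul_excess_le (E := E) (s := s) (t := s * t)
    (fun i => if i = j then 1 else 0) (fun i => by
      split_ifs
      · rw [mul_one, abs_of_pos hs]; exact hs'
      · simp)
  have h2 : {z : ι → E | t < |excess (z j)|} ⊆
      {z | s * t < |s * ∑ i, (if i = j then (1 : ℝ) else 0) * excess (z i)|} := by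
    intro z hz
    have hz' : t < |excess (z j)| := hz
    simp only [ite_mul, one_mul, zero_mul, Finset.sum_ite_eq', Finset.mem_univ, if_true,
      Set.mem_ofPred_eq, abs_mul, abs_of_pos hs]
    gcongr
  refine (measure_mono h2).trans (h.trans ?_)
  simp

/-- One-sided concentration of the weighted quadratic form in a fixed direction. -/
lemma measure_pi_quadratic_le {n R s t ε : ℝ} (a : ι → ℝ) {p : E} (hn : 1 ≤ n)
    (hE : (Module.finrank ℝ E : ℝ) ≤ n) (hp : ‖p‖ ≤ 1) (hR : 0 ≤ R) (hs : 0 ≤ s)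
    (hsR : s * R ≤ 1 / 8) (hε : ε ^ 2 = 1) :
    Measure.pi (fun _ : ι => stdGaussian E) {z | (∀ i, ε * (a i + excess (z i)) ≤ R) ∧
        t ≤ ε * (∑ i, (a i + excess (z i)) * inner ℝ p (z i) ^ 2 - ‖p‖ ^ 2 * ∑ i, (a i + 2))}
      ≤ ENNReal.ofReal (Real.exp (300000 * s ^ 2 * ∑ i, (a i ^ 2 + n) - s * t)) := by
  have h := measure_pi_le_sum_le (fun _ : ι => stdGaussian E)
    (fun i z => s * ε * ((a i + excess z) * inner ℝ p z ^ 2)) (fun i => by fun_prop)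
    (fun i => {z : E | ε * (a i + excess z) ≤ R})
    (fun i => measurableSet_le (by fun_prop) (by fun_prop))
    (fun i => s * ε * (‖p‖ ^ 2 * (a i + 2)) + 300000 * s ^ 2 * (a i ^ 2 + n))
    (s * t + s * ε * (‖p‖ ^ 2 * ∑ i, (a i + 2)))
    (fun i => lintegral_exp_quadratic_le hn hE hp hR hs hsR hε)
  refine (measure_mono ?_).trans (h.trans (le_of_eq ?_))
  · rintro z ⟨hz1, hz2⟩
    refine ⟨hz1, ?_⟩
    rw [← Finset.mul_sum]
    have := mul_le_mul_of_nonneg_left hz2 hs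
    linarith
  · congr 2
    rw [Finset.sum_add_distrib, ← Finset.mul_sum, ← Finset.mul_sum, ← Finset.mul_sum]
    ring

/-- One-sided concentration of the weighted linear form in a fixed direction. -/
lemma measure_pi_linear_le {R s t : ℝ} (q : ι → ℝ) {p : E} (hp : ‖p‖ ≤ 1) :
    Measure.pi (fun _ : ι => stdGaussian E) {z | (∀ i, |q i ^ 2 + excess (z i)| ≤ R) ∧
        s * t ≤ s * ∑ i, (q i ^ 2 + excess (z i)) * q i * inner ℝ p (z i)}
      ≤ ENNReal.ofReal (Real.exp (s ^ 2 * R ^ 2 / 2 * ∑ i, q i ^ 2 - s * t)) := by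
  have h := measure_pi_le_sum_le (fun _ : ι => stdGaussian E)
    (fun i z => (s * q i) * ((q i ^ 2 + excess z) * inner ℝ p z)) (fun i => by fun_prop)
    (fun i => {z : E | |q i ^ 2 + excess z| ≤ R})
    (fun i => measurableSet_le (by fun_prop) (by fun_prop))
    (fun i => (s * q i) ^ 2 * R ^ 2 / 2) (s * t)
    (fun i => lintegral_exp_linear_le hp)
  refine (measure_mono ?_).trans (h.trans (le_of_eq ?_))
  · rintro z ⟨hz1, hz2⟩
    refine ⟨hz1, hz2.trans (le_of_eq ?_)⟩
    rw [Finset.mul_sum]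
    exact Finset.sum_congr rfl fun i _ => by ring
  · congr 3
    rw [Finset.mul_sum]
    exact Finset.sum_congr rfl fun i _ => by ring

/-- Gaussian tail bound for the inner product with a fixed vector. -/
lemma stdGaussian_lt_abs_inner_le {t : ℝ} (ht : 0 ≤ t) (x : E) :
    stdGaussian E {z | t * ‖x‖ < |inner ℝ z x|}
      ≤ 2 * ENNReal.ofReal (Real.exp (-(t ^ 2 / 2))) := by
  by_cases hx : x = 0
  · simp [hx]
  have hx0 : 0 < ‖x‖ := norm_pos_iff.2 hx
  have key : ∀ σ : ℝ, σ ^ 2 = 1 →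
      stdGaussian E {z | t * ‖x‖ ≤ σ * inner ℝ x z} ≤ ENNReal.ofReal (Real.exp (-(t ^ 2 / 2))) := by
    intro σ hσ
    have h := measure_pi_le_sum_le (fun _ : Unit => stdGaussian E)
      (fun _ z => t / ‖x‖ * σ * inner ℝ x z) (fun _ => by fun_prop) (fun _ => Set.univ)
      (fun _ => MeasurableSet.univ) (fun _ => t ^ 2 / 2) (t ^ 2) (fun _ => by
        simp only [Set.indicator_univ]
        rw [lintegral_exp_inner_stdGaussian]
        apply ENNReal.ofReal_le_ofReal
        apply Real.exp_le_exp.2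
        rw [mul_pow, hσ, div_pow]
        apply le_of_eq
        field_simp)
    have hm : MeasurableSet {z : E | t * ‖x‖ ≤ σ * inner ℝ x z} :=
      measurableSet_le (by fun_prop) (by fun_prop)
    have hpre : Measure.pi (fun _ : Unit => stdGaussian E)
        ((fun f => f ()) ⁻¹' {z : E | t * ‖x‖ ≤ σ * inner ℝ x z})
        = stdGaussian E {z : E | t * ‖x‖ ≤ σ * inner ℝ x z} :=
      (measurePreserving_eval (fun _ : Unit => stdGaussian E) ()).measure_preimage
        hm.nullMeasurableSet
    rw [← hpre]
    refine (measure_mono ?_).trans (h.trans (le_of_eq ?_))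
    · intro f hf
      have hf' : t * ‖x‖ ≤ σ * inner ℝ x (f ()) := hf
      refine ⟨fun _ => trivial, ?_⟩
      simp only [Finset.univ_unique, PUnit.default_eq_unit, Finset.sum_singleton]
      have h3 := mul_le_mul_of_nonneg_left hf' (div_nonneg ht hx0.le)
      have h4 : t / ‖x‖ * (t * ‖x‖) = t ^ 2 := by field_simp
      linarith
    · congr 2
      simp only [Finset.univ_unique, Finset.sum_singleton]
      ring
  refine (measure_mono (t := _ ∪ _) ?_).trans ((measure_union_le _ _).trans
    ((add_le_add (key 1 (by simp)) (key (-1) (by simp))).trans (two_mul _).symm.le))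
  intro z hz
  have hz' : t * ‖x‖ < |inner ℝ z x| := hz
  rw [real_inner_comm] at hz'
  rcases lt_abs.1 hz' with h | h
  · left; change t * ‖x‖ ≤ 1 * inner ℝ x z; linarith
  · right; change t * ‖x‖ ≤ -1 * inner ℝ x z; linarith

end NoiseEvents

/-- A uniform bound on the coordinate sections of a set bounds its product measure. -/
lemma measure_pi_le_of_forall_update {ι : Type*} [Fintype ι] [DecidableEq ι] {X : ι → Type*}
    [∀ i, MeasurableSpace (X i)] (μ : ∀ i, Measure (X i)) [∀ i, IsProbabilityMeasure (μ i)]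
    {S : Set (∀ i, X i)} (hS : MeasurableSet S) (j : ι) {c : ENNReal}
    (h : ∀ z, μ j {w | Function.update z j w ∈ S} ≤ c) : Measure.pi μ S ≤ c := by
  by_cases hne : Nonempty (∀ i, X i)
  swap
  · have : S = ∅ := Set.eq_empty_of_forall_notMem fun z _ => hne ⟨z⟩
    simp [this]
  obtain ⟨z₀⟩ := hne
  rw [← lintegral_indicator_one hS]
  rw [lintegral_eq_lmarginal_univ z₀,
    lmarginal_erase' _ (measurable_one.indicator hS) (Finset.mem_univ j)]
  have h1 : (fun x => ∫⁻ y, S.indicator (1 : (∀ i, X i) → ENNReal) (Function.update x j y) ∂μ j)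
      ≤ fun _ => c := by
    intro x
    refine le_trans (le_of_eq ?_) (h x)
    have hm : MeasurableSet {w | Function.update x j w ∈ S} := measurable_update x hS
    rw [← lintegral_indicator_one hm]
    rfl
  refine (lmarginal_mono h1 z₀).trans ?_
  simp [lmarginal]

section LeaveOneOut

variable {E : Type*} [NormedAddCommGroup E] [InnerProductSpace ℝ E] [FiniteDimensional ℝ E]
  [MeasurableSpace E] [BorelSpace E] {ι : Type*} [Fintype ι] [DecidableEq ι]

/-- Each Gaussian vector is nearly orthogonal to vectors built from the other ones. -/
lemma measure_pi_exists_lt_abs_inner_le {t : ℝ} (ht : 0 ≤ t) (M : ℕ)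
    (y : ι → ℕ → (ι → E) → E) (hy : ∀ j m, Continuous (y j m))
    (hupd : ∀ j m z w, y j m (Function.update z j w) = y j m z) :
    Measure.pi (fun _ : ι => stdGaussian E)
        {z | ∃ j, ∃ m < M, t * ‖y j m z‖ < |inner ℝ (z j) (y j m z)|}
      ≤ Fintype.card ι * (M * (2 * ENNReal.ofReal (Real.exp (-(t ^ 2 / 2))))) := by
  have hset : {z : ι → E | ∃ j, ∃ m < M, t * ‖y j m z‖ < |inner ℝ (z j) (y j m z)|}
      = ⋃ j ∈ (Finset.univ : Finset ι), ⋃ m ∈ Finset.range M,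
        {z | t * ‖y j m z‖ < |inner ℝ (z j) (y j m z)|} := by
    ext; simp
  rw [hset, ← nsmul_eq_mul, ← nsmul_eq_mul, ← Finset.card_univ, ← Finset.sum_const,
    ← Finset.card_range M, ← Finset.sum_const, Finset.card_range]
  refine (measure_biUnion_finset_le _ _).trans (Finset.sum_le_sum fun j _ => ?_)
  refine (measure_biUnion_finset_le _ _).trans (Finset.sum_le_sum fun m _ => ?_)
  have := hy j m
  refine measure_pi_le_of_forall_update _
    (measurableSet_lt (Continuous.measurable (by fun_prop))
      (Continuous.measurable (by fun_prop))) j fun z => ?_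
  simp only [Set.mem_ofPred_eq, hupd, Function.update_self]
  exact stdGaussian_lt_abs_inner_le ht _

end LeaveOneOut

section Resolvent

variable {E : Type*} [NormedAddCommGroup E] [InnerProductSpace ℝ E]

lemma norm_pow_apply_le {D : E →ₗ[ℝ] E} {Δ : ℝ} (hΔ : 0 ≤ Δ) (hD : ∀ x, ‖D x‖ ≤ Δ * ‖x‖)
    (m : ℕ) (r : E) : ‖(D ^ m) r‖ ≤ Δ ^ m * ‖r‖ := by
  induction m with
  | zero => simp
  | succ m ih =>
    rw [pow_succ', Module.End.mul_apply]
    calc _ ≤ Δ * ‖(D ^ m) r‖ := hD _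
      _ ≤ Δ * (Δ ^ m * ‖r‖) := by gcongr
      _ = _ := by ring

lemma norm_le_div_of_resolvent {D : E →ₗ[ℝ] E} {Δ μ : ℝ} (hD : ∀ x, ‖D x‖ ≤ Δ * ‖x‖)
    (hμ : Δ < |μ|) (h : E) : ‖h‖ ≤ ‖μ • h - D h‖ / (|μ| - Δ) := by
  rw [le_div_iff₀ (by linarith)]
  have h1 := norm_sub_norm_le (μ • h) (D h)
  rw [norm_smul, Real.norm_eq_abs] at h1
  linarith [hD h]

/-- Leave-one-out estimate: if `u` solves a perturbed resolvent equation and `z` is nearly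
orthogonal to the Krylov vectors `D ^ m r`, then `z` is nearly orthogonal to `u`. -/
lemma abs_inner_le_of_resolvent {D : E →ₗ[ℝ] E} {Δ μ c a t : ℝ} {r z u : E} {M : ℕ}
    (hΔ : 0 ≤ Δ) (hD : ∀ x, ‖D x‖ ≤ Δ * ‖x‖) (hμ : Δ < |μ|) (ht : 0 ≤ t)
    (hu : μ • u - D u = a • z + c • r)
    (hK : ∀ m < M, |inner ℝ z ((D ^ m) r)| ≤ t * ‖(D ^ m) r‖) :
    |inner ℝ z u| ≤ |a| * ‖z‖ ^ 2 / (|μ| - Δ) + |c| * (t * ‖r‖ / (|μ| - Δ)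
      + (Δ / |μ|) ^ M * ‖r‖ * ‖z‖ / (|μ| - Δ)) := by
  have hμ0 : 0 < |μ| := by linarith
  have hμne : μ ≠ 0 := abs_pos.1 hμ0
  have hg : 0 < |μ| - Δ := by linarith
  set p : E := ∑ m ∈ Finset.range M, (μ⁻¹) ^ (m + 1) • (D ^ m) r with hp
  have hpe : μ • p - D p = r - (μ⁻¹) ^ M • (D ^ M) r := by
    have h1 : ∀ K : ℕ, μ • (∑ m ∈ Finset.range K, (μ⁻¹) ^ (m + 1) • (D ^ m) r)
        - D (∑ m ∈ Finset.range K, (μ⁻¹) ^ (m + 1) • (D ^ m) r)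
        = r - (μ⁻¹) ^ K • (D ^ K) r := by
      intro K
      induction K with
      | zero => simp
      | succ K ih =>
        rw [Finset.sum_range_succ, smul_add, map_add, add_sub_add_comm, ih, map_smul, smul_smul,
          pow_succ' μ⁻¹ K, ← mul_assoc, mul_inv_cancel₀ hμne, one_mul, pow_succ' D K,
          Module.End.mul_apply]
        abel
    exact h1 M
  set h : E := u - c • p with hh
  have hhe : μ • h - D h = a • z + (c * (μ⁻¹) ^ M) • (D ^ M) r := by
    have : μ • h - D h = (μ • u - D u) - c • (μ • p - D p) := by
      rw [hh, smul_sub, map_sub, map_smul, smul_sub, smul_comm μ c p]; abel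
    rw [this, hu, hpe, smul_sub, smul_smul]; abel
  have hDM : ‖(c * (μ⁻¹) ^ M) • (D ^ M) r‖ ≤ |c| * ((Δ / |μ|) ^ M * ‖r‖) := by
    rw [norm_smul, Real.norm_eq_abs, abs_mul, abs_pow, abs_inv, div_pow, inv_pow]
    calc _ ≤ |c| * (|μ| ^ M)⁻¹ * (Δ ^ M * ‖r‖) := by
          gcongr; exact norm_pow_apply_le hΔ hD M r
      _ = _ := by ring
  have hhn : ‖h‖ ≤ (|a| * ‖z‖ + |c| * ((Δ / |μ|) ^ M * ‖r‖)) / (|μ| - Δ) := by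
    refine (norm_le_div_of_resolvent hD hμ h).trans ?_
    rw [hhe]
    gcongr
    refine (norm_add_le _ _).trans (add_le_add ?_ hDM)
    rw [norm_smul, Real.norm_eq_abs]
  have hpn : |inner ℝ z p| ≤ t * ‖r‖ / (|μ| - Δ) := by
    have h1 : |inner ℝ z p| ≤ ∑ m ∈ Finset.range M, |μ|⁻¹ ^ (m + 1) * (t * (Δ ^ m * ‖r‖)) := by
      rw [hp, inner_sum]
      refine (Finset.abs_sum_le_sum_abs _ _).trans (Finset.sum_le_sum fun m hm => ?_)
      rw [real_inner_smul_right, abs_mul, abs_pow, abs_inv]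
      gcongr
      refine (hK m (Finset.mem_range.1 hm)).trans ?_
      gcongr
      exact norm_pow_apply_le hΔ hD m r
    have h2 : ∑ m ∈ Finset.range M, |μ|⁻¹ ^ (m + 1) * (t * (Δ ^ m * ‖r‖))
        = t * ‖r‖ * |μ|⁻¹ * ∑ m ∈ Finset.range M, (Δ / |μ|) ^ m := by
      rw [Finset.mul_sum]
      refine Finset.sum_congr rfl fun m _ => ?_
      rw [div_eq_mul_inv, mul_pow, pow_succ]; ring
    have hx0 : 0 ≤ Δ / |μ| := by positivity
    have hx1 : Δ / |μ| < 1 := (div_lt_one hμ0).2 hμ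
    have h3 : ∑ m ∈ Finset.range M, (Δ / |μ|) ^ m ≤ (1 - Δ / |μ|)⁻¹ := by
      rw [← tsum_geometric_of_lt_one hx0 hx1]
      exact (summable_geometric_of_lt_one hx0 hx1).sum_le_tsum _ fun _ _ => by positivity
    rw [h2] at h1
    calc _ ≤ _ := h1
      _ ≤ t * ‖r‖ * |μ|⁻¹ * (1 - Δ / |μ|)⁻¹ := by gcongr
      _ = t * ‖r‖ / (|μ| - Δ) := by
        rw [mul_assoc, ← mul_inv, mul_sub, mul_one, mul_div_cancel₀ _ hμ0.ne']; rfl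
  have hsplit : inner ℝ z u = inner ℝ z h + c * inner ℝ z p := by
    rw [hh, inner_sub_right, real_inner_smul_right]; ring
  rw [hsplit]
  calc _ ≤ |inner ℝ z h| + |c * inner ℝ z p| := abs_add_le _ _
    _ ≤ ‖z‖ * ‖h‖ + |c| * |inner ℝ z p| := by
      rw [abs_mul]; gcongr; exact abs_real_inner_le_norm _ _
    _ ≤ ‖z‖ * ((|a| * ‖z‖ + |c| * ((Δ / |μ|) ^ M * ‖r‖)) / (|μ| - Δ))
        + |c| * (t * ‖r‖ / (|μ| - Δ)) := by gcongr
    _ = _ := by ring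

/-- The operator `x ↦ ∑ i ∈ s, w i ⟨z i, x⟩ z i - c x`. -/
noncomputable def weightedGram {ι : Type*} (s : Finset ι) (w : ι → ℝ) (z : ι → E) (c : ℝ) : E →ₗ[ℝ] E :=
  ∑ i ∈ s, w i • (innerₗ E (z i)).smulRight (z i) - c • LinearMap.id

lemma weightedGram_apply {ι : Type*} (s : Finset ι) (w : ι → ℝ) (z : ι → E) (c : ℝ) (x : E) :
    weightedGram s w z c x = ∑ i ∈ s, (w i * inner ℝ (z i) x) • z i - c • x := by
  simp [weightedGram, LinearMap.sum_apply, smul_smul]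

/-- The vector `∑ i ∈ s, w i q i z i`. -/
noncomputable def weightedCross {ι : Type*} (s : Finset ι) (w q : ι → ℝ) (z : ι → E) : E :=
  ∑ i ∈ s, (w i * q i) • z i

/-- Entrywise control of an eigenvector of the weighted Gram operator of the vectors
`(q i, z i)`, in terms of deterministic quantities. -/
lemma exists_sign_forall_abs_sub_lt {ι : Type*} [Fintype ι] [DecidableEq ι]
    {w q : ι → ℝ} {z : ι → E} {c ρ H L μ u₁ : ℝ} {u : E} {M : ℕ}
    (hρ : 0 < ρ) (hρ1 : ρ ≤ 1) (hH : 0 < H) (hL : 1 ≤ L) (hq : ∀ i, |q i| ≤ (√ρ)⁻¹)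
    (hμ : 200 * H ≤ |μ|)
    (hD : ∀ x, ‖weightedGram Finset.univ w z c x‖ ≤ 9 * H * ‖x‖)
    (hr : ‖weightedCross Finset.univ w q z‖ * √L ≤ 2 * H)
    (hwz : ∀ i, |w i| * ‖z i‖ ^ 2 ≤ H) (hwqz : ∀ i, |w i| * |q i| * ‖z i‖ * √L ≤ H)
    (hz : ∀ i, ‖z i‖ ≤ M)
    (hK : ∀ i, ∀ m < M,
      |inner ℝ (z i) (((weightedGram (Finset.univ.erase i) w z c) ^ m)
        (weightedCross (Finset.univ.erase i) w q z))|
      ≤ 4 * √L * ‖((weightedGram (Finset.univ.erase i) w z c) ^ m)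
        (weightedCross (Finset.univ.erase i) w q z)‖)
    (hu1 : u₁ ^ 2 + ‖u‖ ^ 2 = 1)
    (hu : weightedGram Finset.univ w z c u + u₁ • weightedCross Finset.univ w q z = μ • u) :
    ∃ s : ℝ, (s = 1 ∨ s = -1) ∧
      ∀ i, |q i * u₁ + inner ℝ (z i) u - s * q i| < 0.5 * (√ρ)⁻¹ := by
  have hsL : 1 ≤ √L := Real.one_le_sqrt.2 hL
  have hsρ : 1 ≤ (√ρ)⁻¹ := by
    rw [one_le_inv₀ (Real.sqrt_pos.2 hρ)]; exact Real.sqrt_le_one.2 hρ1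
  have hu1' : |u₁| ≤ 1 := by
    rw [← sq_le_one_iff_abs_le_one]; nlinarith [sq_nonneg ‖u‖]
  have hrn : ‖weightedCross Finset.univ w q z‖ ≤ 2 * H :=
    (le_mul_of_one_le_right (norm_nonneg _) hsL).trans hr
  have hun : ‖u‖ ≤ 0.02 := by
    refine (norm_le_div_of_resolvent hD (μ := μ) (by linarith) u).trans ?_
    have : μ • u - weightedGram Finset.univ w z c u
        = u₁ • weightedCross Finset.univ w q z := by rw [← hu]; abel
    rw [this, norm_smul, Real.norm_eq_abs, div_le_iff₀ (by linarith)]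
    have : |u₁| * ‖weightedCross Finset.univ w q z‖ ≤ 1 * (2 * H) := by gcongr
    norm_num at *
    linarith
  have hin : ∀ i, |inner ℝ (z i) u| ≤ 0.1 * (√ρ)⁻¹ := by
    intro i
    set D' := weightedGram (Finset.univ.erase i) w z c with hD'
    set r' := weightedCross (Finset.univ.erase i) w q z with hr'
    have hDe : ∀ x, D' x = weightedGram Finset.univ w z c x - (w i * inner ℝ (z i) x) • z i := by
      intro x
      rw [hD', weightedGram_apply, weightedGram_apply,
        ← Finset.add_sum_erase Finset.univ _ (Finset.mem_univ i)]
      abel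
    have hre : r' = weightedCross Finset.univ w q z - (w i * q i) • z i := by
      rw [hr', weightedCross, weightedCross,
        ← Finset.add_sum_erase Finset.univ _ (Finset.mem_univ i)]
      abel
    have hD1 : ∀ x, ‖D' x‖ ≤ 10 * H * ‖x‖ := by
      intro x
      rw [hDe]
      calc _ ≤ ‖weightedGram Finset.univ w z c x‖ + ‖(w i * inner ℝ (z i) x) • z i‖ :=
            norm_sub_le _ _
        _ ≤ 9 * H * ‖x‖ + |w i| * (‖z i‖ * ‖x‖) * ‖z i‖ := by
            rw [norm_smul, Real.norm_eq_abs, abs_mul]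
            gcongr
            · exact hD x
            · exact abs_real_inner_le_norm _ _
        _ = 9 * H * ‖x‖ + (|w i| * ‖z i‖ ^ 2) * ‖x‖ := by ring
        _ ≤ 9 * H * ‖x‖ + H * ‖x‖ := by gcongr; exact hwz i
        _ = _ := by ring
    have hr1 : ‖r'‖ * √L ≤ 3 * H := by
      have h1 : ‖r'‖ ≤ ‖weightedCross Finset.univ w q z‖ + |w i| * |q i| * ‖z i‖ := by
        rw [hre]
        refine (norm_sub_le _ _).trans (le_of_eq ?_)
        rw [norm_smul, Real.norm_eq_abs, abs_mul]
      have h2 := mul_le_mul_of_nonneg_right h1 (Real.sqrt_nonneg L)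
      linarith [hwqz i]
    have hr2 : ‖r'‖ ≤ 3 * H := (le_mul_of_one_le_right (norm_nonneg _) hsL).trans hr1
    have heq : μ • u - D' u = (w i * (q i * u₁ + inner ℝ (z i) u)) • z i + u₁ • r' := by
      rw [hDe, hre, ← hu, smul_sub, smul_smul, mul_add, add_smul,
        show w i * (q i * u₁) = u₁ * (w i * q i) by ring]
      abel
    have hmain := abs_inner_le_of_resolvent (M := M) (t := 4 * √L) (by positivity) hD1
      (by linarith) (by positivity) heq (hK i)
    have hg : 190 * H ≤ |μ| - 10 * H := by linarith
    have hg0 : 0 < |μ| - 10 * H := by linarith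
    have b1 : |w i * (q i * u₁ + inner ℝ (z i) u)| * ‖z i‖ ^ 2 / (|μ| - 10 * H)
        ≤ ((√ρ)⁻¹ + |inner ℝ (z i) u|) / 190 := by
      have h1 : |w i * (q i * u₁ + inner ℝ (z i) u)| * ‖z i‖ ^ 2
          ≤ H * ((√ρ)⁻¹ + |inner ℝ (z i) u|) := by
        have h2 : |q i * u₁ + inner ℝ (z i) u| ≤ (√ρ)⁻¹ + |inner ℝ (z i) u| := by
          refine (abs_add_le _ _).trans ?_
          rw [abs_mul]
          have : |q i| * |u₁| ≤ (√ρ)⁻¹ * 1 := by gcongr; exact hq i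
          linarith
        rw [abs_mul]
        calc _ = (|w i| * ‖z i‖ ^ 2) * |q i * u₁ + inner ℝ (z i) u| := by ring
          _ ≤ _ := by gcongr; exact hwz i
      calc _ ≤ H * ((√ρ)⁻¹ + |inner ℝ (z i) u|) / (190 * H) := by gcongr
        _ = _ := by field_simp
    have b2 : 4 * √L * ‖r'‖ / (|μ| - 10 * H) ≤ 12 / 190 := by
      have h1 : 4 * √L * ‖r'‖ ≤ 12 * H := by linarith
      calc _ ≤ (12 * H) / (190 * H) := by gcongr
        _ = _ := by field_simp
    have b3 : (10 * H / |μ|) ^ M * ‖r'‖ * ‖z i‖ / (|μ| - 10 * H) ≤ 3 / 190 := by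
      have h1 : 10 * H / |μ| ≤ 1 / 2 := by
        rw [div_le_iff₀ (by linarith)]; linarith
      have h2 : (10 * H / |μ|) ^ M * ‖z i‖ ≤ 1 := by
        calc _ ≤ (1 / 2 : ℝ) ^ M * M := by
              gcongr
              exact hz i
          _ ≤ (1 / 2 : ℝ) ^ M * 2 ^ M := by
              gcongr; exact_mod_cast (Nat.lt_two_pow_self (n := M)).le
          _ = 1 := by rw [← mul_pow]; norm_num
      calc _ = ((10 * H / |μ|) ^ M * ‖z i‖) * ‖r'‖ / (|μ| - 10 * H) := by ring
        _ ≤ 1 * (3 * H) / (190 * H) := by gcongr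
        _ = _ := by field_simp
    have b4 : |u₁| * (4 * √L * ‖r'‖ / (|μ| - 10 * H)
        + (10 * H / |μ|) ^ M * ‖r'‖ * ‖z i‖ / (|μ| - 10 * H)) ≤ 1 * (12 / 190 + 3 / 190) := by
      gcongr
    norm_num at *
    linarith
  have hsmall : ∀ s : ℝ, |u₁ - s| ≤ 0.01 → ∀ i,
      |q i * u₁ + inner ℝ (z i) u - s * q i| < 0.5 * (√ρ)⁻¹ := by
    intro s hs i
    have h1 : q i * u₁ + inner ℝ (z i) u - s * q i = q i * (u₁ - s) + inner ℝ (z i) u := by ring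
    rw [h1]
    refine (abs_add_le _ _).trans_lt ?_
    rw [abs_mul]
    have h2 : |q i| * |u₁ - s| ≤ (√ρ)⁻¹ * 0.01 := by gcongr; exact hq i
    have h3 := hin i
    norm_num at *
    linarith
  have hu2 : 0.99 ≤ |u₁| := by
    have h1 : ‖u‖ ^ 2 ≤ 0.02 ^ 2 := by gcongr
    have h2 : |u₁| ^ 2 = 1 - ‖u‖ ^ 2 := by rw [sq_abs]; linarith
    by_contra! hcon
    have h3 : |u₁| ^ 2 ≤ 0.99 ^ 2 := by gcongr
    rw [h2] at h3
    norm_num at h1 h3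
    linarith
  rcases le_total 0 u₁ with h | h
  · rw [abs_of_nonneg h] at hu2 hu1'
    refine ⟨1, Or.inl rfl, hsmall 1 ?_⟩
    rw [abs_le]; norm_num at *; constructor <;> linarith
  · rw [abs_of_nonpos h] at hu2 hu1'
    refine ⟨-1, Or.inr rfl, hsmall (-1) ?_⟩
    rw [abs_le]; norm_num at *; constructor <;> linarith

end Resolvent

lemma weightedGram_isSymmetric {E ι : Type*} [NormedAddCommGroup E] [InnerProductSpace ℝ E]
    (s : Finset ι) (w : ι → ℝ) (z : ι → E) (c : ℝ) : (weightedGram s w z c).IsSymmetric := by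
  intro x y
  rw [weightedGram_apply, weightedGram_apply, inner_sub_left, inner_sub_right, sum_inner,
    inner_sum, real_inner_smul_left, real_inner_smul_right]
  congr 1
  refine Finset.sum_congr rfl fun i _ => ?_
  rw [real_inner_smul_left, real_inner_smul_right, real_inner_comm]
  ring

section Exponents

variable {N κ ρ n L T c d R A : ℝ}

lemma two_mul_sq_mul_sub_mul_le (hn : 1 ≤ n) (hL : 1 ≤ L) (hd : d ≤ n)
    (hT : T = 16 * (√(n * L) + L)) :
    2 * (L / (4 * (√(n * L) + L))) ^ 2 * d - L / (4 * (√(n * L) + L)) * T ≤ -(3 * L) := by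
  have hnL : 0 < n * L := by positivity
  have hσ2 : n * L ≤ (√(n * L) + L) ^ 2 := by
    have := Real.sq_sqrt hnL.le
    nlinarith [Real.sqrt_nonneg (n * L)]
  have hσ0 : 0 < √(n * L) + L := by positivity
  set σ : ℝ := √(n * L) + L with hσ
  have h1 : L / (4 * σ) * T = 4 * L := by rw [hT]; field_simp; norm_num
  have h2 : 2 * (L / (4 * σ)) ^ 2 * d ≤ L := by
    rw [show 2 * (L / (4 * σ)) ^ 2 * d = L * (L * d) / (8 * σ ^ 2) by field_simp; ring,
      div_le_iff₀ (by positivity)]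
    have h3 : L * d ≤ σ ^ 2 := le_trans (by nlinarith) hσ2
    nlinarith [sq_nonneg σ]
  linarith

lemma exponent_signal_le (hN : 0 < N) (hκ : 0 < κ) (hρ : 0 < ρ) (hn : 1 ≤ n) (hd : d ≤ n)
    (hA0 : 0 ≤ A) (hA : A ≤ 2 * N / ρ) (hL : 96 * (L + L * (n * ρ)) ≤ κ ^ 2 * N) :
    2 * (κ * ρ / (8 * (1 + n * ρ))) ^ 2 * d * A
      - κ * ρ / (8 * (1 + n * ρ)) * (κ * N / ρ) ≤ -(3 * L) := by
  set s : ℝ := κ * ρ / (8 * (1 + n * ρ)) with hs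
  have hs0 : 0 < s := by positivity
  have h1 : 2 * s ^ 2 * d * A ≤ 2 * s ^ 2 * n * (2 * N / ρ) := by gcongr
  have h3 : 4 * s * n ≤ κ / 2 := by
    rw [hs, show 4 * (κ * ρ / (8 * (1 + n * ρ))) * n = κ * (n * ρ) / (2 * (1 + n * ρ)) by
      field_simp; norm_num, div_le_div_iff₀ (by positivity) (by norm_num)]
    nlinarith
  have h2 : 2 * s ^ 2 * n * (2 * N / ρ) ≤ s * (κ * N / ρ) / 2 := by
    calc _ = 4 * s * n * (s * (N / ρ)) := by ring
      _ ≤ κ / 2 * (s * (N / ρ)) := by gcongr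
      _ = _ := by ring
  have h4 : 3 * L ≤ s * (κ * N / ρ) / 2 := by
    rw [hs, show κ * ρ / (8 * (1 + n * ρ)) * (κ * N / ρ) / 2
      = κ ^ 2 * N / (16 * (1 + n * ρ)) by field_simp; norm_num, le_div_iff₀ (by positivity)]
    have : 0 < κ ^ 2 * N := by positivity
    linarith
  linarith

lemma exponent_quadratic_le (hN : 0 < N) (hκ : 0 < κ) (hρ : 0 < ρ) (hT : 0 < T) (hn : 1 ≤ n)
    (hR : R = 1 / ρ + T) (hL : 0 ≤ L) (hρ1 : ρ ≤ 1) (hA : A ≤ 2 * N / ρ + N * n)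
    (hLn : 19200000 * ((n + L) * (1 + ρ * T + n * ρ ^ 2)) ≤ κ ^ 2 * N) :
    300000 * (κ / 2400000 / (R + n * ρ)) ^ 2 * A - κ / 2400000 / (R + n * ρ) * (κ * N / ρ)
      ≤ -(4 * n + 3 * L) := by
  have hR0 : 0 < R := by rw [hR]; positivity
  set s : ℝ := κ / 2400000 / (R + n * ρ) with hs
  have hs0 : 0 < s := by positivity
  have h1 : A ≤ 2 * N / ρ * (1 + n * ρ) := by
    have : 2 * N / ρ * (1 + n * ρ) = 2 * N / ρ + 2 * (N * n) := by field_simp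
    rw [this]
    have : 0 ≤ N * n := by positivity
    linarith
  have h2 : s * (1 + n * ρ) ≤ κ / 2400000 := by
    rw [hs, div_mul_eq_mul_div, div_le_iff₀ (by positivity)]
    gcongr
    have : 1 ≤ 1 / ρ := by rw [le_div_iff₀ hρ]; linarith
    rw [hR]; linarith
  have h3 : 300000 * s ^ 2 * A ≤ s * (κ * N / ρ) / 2 := by
    calc _ ≤ 300000 * s ^ 2 * (2 * N / ρ * (1 + n * ρ)) := by gcongr
      _ = 600000 * s * (N / ρ) * (s * (1 + n * ρ)) := by ring
      _ ≤ 600000 * s * (N / ρ) * (κ / 2400000) := by gcongr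
      _ = s * (κ * N / ρ) / 4 := by ring
      _ ≤ _ := by
        have : 0 < s * (κ * N / ρ) := by positivity
        linarith
  have h4 : 4 * n + 3 * L ≤ s * (κ * N / ρ) / 2 := by
    have h5 : R + n * ρ = (1 + ρ * T + n * ρ ^ 2) / ρ := by rw [hR]; field_simp
    rw [hs, h5, show κ / 2400000 / ((1 + ρ * T + n * ρ ^ 2) / ρ) * (κ * N / ρ) / 2
        = κ ^ 2 * N / (4800000 * (1 + ρ * T + n * ρ ^ 2)) by field_simp; norm_num,
        le_div_iff₀ (by positivity)]
    calc (4 * n + 3 * L) * (4800000 * (1 + ρ * T + n * ρ ^ 2))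
        ≤ (4 * (n + L)) * (4800000 * (1 + ρ * T + n * ρ ^ 2)) := by gcongr; linarith
      _ = 19200000 * ((n + L) * (1 + ρ * T + n * ρ ^ 2)) := by ring
      _ ≤ κ ^ 2 * N := hLn
  linarith

lemma exponent_linear_le (hN : 0 < N) (hκ : 0 < κ) (hρ : 0 < ρ) (hT : 0 < T)
    (hR : R = 1 / ρ + T) (hL : 0 < L) (hA : A ≤ 2 * N)
    (hLn : 16 * (L * (n + L) * (1 + ρ * T) ^ 2) ≤ κ ^ 2 * N) :
    (κ * N / ρ / √L / (2 * (R ^ 2 * N))) ^ 2 * R ^ 2 / 2 * A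
      - κ * N / ρ / √L / (2 * (R ^ 2 * N)) * (κ * N / ρ / √L) ≤ -(4 * n + 3 * L) := by
  have hR0 : 0 < R := by rw [hR]; positivity
  have hRρ : R = (1 + ρ * T) / ρ := by rw [hR]; field_simp
  have hsL : 0 < √L := Real.sqrt_pos.2 hL
  set K : ℝ := κ * N / ρ / √L with hK
  have hK0 : 0 < K := by positivity
  set s : ℝ := K / (2 * (R ^ 2 * N)) with hs
  have hs0 : 0 < s := by positivity
  have h1 : s ^ 2 * R ^ 2 / 2 * A ≤ s ^ 2 * R ^ 2 / 2 * (2 * N) := by gcongr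
  have h2 : s ^ 2 * R ^ 2 / 2 * (2 * N) - s * K = -(K ^ 2 / (4 * (R ^ 2 * N))) := by
    rw [hs]; field_simp; ring
  have h3 : K ^ 2 / (4 * (R ^ 2 * N)) = κ ^ 2 * N / (4 * (L * (1 + ρ * T) ^ 2)) := by
    have h0 : 1 + ρ * T ≠ 0 := by positivity
    rw [hK, div_pow, Real.sq_sqrt hL.le, hRρ]; field_simp
  have h4 : 4 * n + 3 * L ≤ κ ^ 2 * N / (4 * (L * (1 + ρ * T) ^ 2)) := by
    rw [le_div_iff₀ (by positivity)]
    calc (4 * n + 3 * L) * (4 * (L * (1 + ρ * T) ^ 2))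
        ≤ (4 * (n + L)) * (4 * (L * (1 + ρ * T) ^ 2)) := by gcongr; linarith
      _ = 16 * (L * (n + L) * (1 + ρ * T) ^ 2) := by ring
      _ ≤ κ ^ 2 * N := hLn
  linarith

end Exponents

lemma card_mul_exp_le {P D : ℕ} {n L : ℝ} (hP : P ≤ 2 * 25 ^ D) (hD : (D : ℝ) ≤ n) :
    (P : ℝ) * Real.exp (-(4 * n + 3 * L)) ≤ 2 * Real.exp (-(3 * L)) := by
  have h1 : (P : ℝ) ≤ 2 * 25 ^ D := by exact_mod_cast hP
  have h25 : (25 : ℝ) ≤ Real.exp 4 := by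
    have h2 := Real.exp_one_gt_d9
    have h3 : Real.exp 4 = Real.exp 1 ^ 4 := by rw [← Real.exp_nat_mul]; norm_num
    rw [h3]
    calc (25 : ℝ) ≤ 2.7 ^ 4 := by norm_num
      _ ≤ _ := by gcongr; linarith
  have h4 : (25 : ℝ) ^ D ≤ Real.exp (4 * n) := by
    calc _ ≤ Real.exp 4 ^ D := by gcongr
      _ = Real.exp (4 * D) := by rw [← Real.exp_nat_mul]; ring_nf
      _ ≤ _ := by gcongr
  calc _ ≤ 2 * Real.exp (4 * n) * Real.exp (-(4 * n + 3 * L)) := by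
        gcongr; linarith
    _ = 2 * Real.exp (-(3 * L)) := by rw [mul_assoc, ← Real.exp_add]; congr 2; ring

/-- The event that the Gaussian vectors `z` satisfy all the estimates needed for the entrywise
analysis of the leading eigenvector, at signal level `H`. -/
structure NoiseEvent {E ι : Type*} [NormedAddCommGroup E] [InnerProductSpace ℝ E] [Fintype ι]
    [DecidableEq ι] (q : ι → ℝ) (N : ℕ) (H L : ℝ) (z : ι → E) : Prop where
  signal : |∑ i, q i ^ 2 * excess (z i)| ≤ H
  gram : ∀ x, ‖weightedGram Finset.univ (fun i => q i ^ 2 + excess (z i)) z (3 * N) x‖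
    ≤ 9 * H * ‖x‖
  cross : ‖weightedCross Finset.univ (fun i => q i ^ 2 + excess (z i)) q z‖ * √L ≤ 2 * H
  weight_mul_sq : ∀ i, |q i ^ 2 + excess (z i)| * ‖z i‖ ^ 2 ≤ H
  weight_mul : ∀ i, |q i ^ 2 + excess (z i)| * |q i| * ‖z i‖ * √L ≤ H
  norm_le : ∀ i, ‖z i‖ ≤ N
  krylov : ∀ i, ∀ m < N, |inner ℝ (z i)
      (((weightedGram (Finset.univ.erase i) (fun i => q i ^ 2 + excess (z i)) z (3 * N)) ^ m)
        (weightedCross (Finset.univ.erase i) (fun i => q i ^ 2 + excess (z i)) q z))|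
    ≤ 4 * √L *
      ‖((weightedGram (Finset.univ.erase i) (fun i => q i ^ 2 + excess (z i)) z (3 * N)) ^ m)
        (weightedCross (Finset.univ.erase i) (fun i => q i ^ 2 + excess (z i)) q z)‖

/-- Deterministic estimates implied by the bounds for test vectors. -/
lemma noiseEvent_of_test_vectors {E ι : Type*} [NormedAddCommGroup E] [InnerProductSpace ℝ E]
    [Fintype ι] [DecidableEq ι] {N : ℕ} {κ ρ n L T : ℝ} {q : ι → ℝ} {z : ι → E}
    {P : Finset E} (hN : Fintype.card ι = N) (hN0 : 1 ≤ (N : ℝ)) (hκ : 0 < κ)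
    (hρ : 0 < ρ) (hρ1 : ρ ≤ 1) (hρN : 1 ≤ ρ * N) (hT : 0 < T) (hL : 1 ≤ L)
    (hE : (Module.finrank ℝ E : ℝ) ≤ n) (hq : ∀ i, q i ^ 2 ≤ 1 / ρ)
    (hq2 : |∑ i, q i ^ 2 - N| ≤ κ * N)
    (hPsym : ∀ (A : E →ₗ[ℝ] E) (m : ℝ), A.IsSymmetric → (∀ p ∈ P, |inner ℝ p (A p)| ≤ m) →
        ∀ x, ‖A x‖ ≤ 8 * m * ‖x‖)
    (hPlin : ∀ (r : E) (m : ℝ), (∀ p ∈ P, inner ℝ p r ≤ m) → ‖r‖ ≤ 2 * m)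
    (h1 : (1 + ρ * T) * (n + T) ≤ κ * N) (h2 : (1 + ρ * T) ^ 2 * (n + T) * L ≤ κ ^ 2 * N)
    (h3 : n + T ≤ N) (hz1 : ∀ i, |excess (z i)| ≤ T)
    (hz2 : |∑ i, q i ^ 2 * excess (z i)| ≤ κ * N / ρ)
    (hz3 : ∀ p ∈ P, |∑ i, (q i ^ 2 + excess (z i)) * inner ℝ p (z i) ^ 2
        - ‖p‖ ^ 2 * ∑ i, (q i ^ 2 + 2)| ≤ κ * N / ρ)
    (hz4 : ∀ p ∈ P, ∑ i, (q i ^ 2 + excess (z i)) * q i * inner ℝ p (z i)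
        ≤ κ * N / ρ / √L)
    (hz5 : ∀ i, ∀ m < N, |inner ℝ (z i)
      (((weightedGram (Finset.univ.erase i) (fun i => q i ^ 2 + excess (z i)) z (3 * N)) ^ m)
        (weightedCross (Finset.univ.erase i) (fun i => q i ^ 2 + excess (z i)) q z))|
    ≤ 4 * √L *
      ‖((weightedGram (Finset.univ.erase i) (fun i => q i ^ 2 + excess (z i)) z (3 * N)) ^ m)
        (weightedCross (Finset.univ.erase i) (fun i => q i ^ 2 + excess (z i)) q z)‖) :
    NoiseEvent q N (κ * N / ρ) L z := by
  have hρT : 1 ≤ 1 + ρ * T := by linarith [mul_pos hρ hT]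
  have hznorm : ∀ i, ‖z i‖ ^ 2 ≤ n + T := by
    intro i
    have := (abs_le.1 (hz1 i)).2
    unfold excess at this
    linarith
  have hw : ∀ i, |q i ^ 2 + excess (z i)| ≤ (1 + ρ * T) / ρ := by
    intro i
    have e : (1 + ρ * T) / ρ = 1 / ρ + T := by field_simp
    rw [e]
    refine (abs_add_le _ _).trans (add_le_add ?_ (hz1 i))
    rw [abs_of_nonneg (sq_nonneg _)]; exact hq i
  have hsL : 0 < √L := Real.sqrt_pos.2 (by linarith)
  refine ⟨hz2, ?_, ?_, ?_, ?_, ?_, hz5⟩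
  · intro x
    set A := weightedGram Finset.univ (fun i => q i ^ 2 + excess (z i)) z (∑ i, (q i ^ 2 + 2))
      with hA
    have hAx : ‖A x‖ ≤ 8 * (κ * N / ρ) * ‖x‖ := by
      refine hPsym A _ (weightedGram_isSymmetric _ _ _ _) (fun p hp => ?_) x
      convert hz3 p hp using 2
      rw [hA, weightedGram_apply, inner_sub_right, inner_sum, real_inner_smul_right,
        real_inner_self_eq_norm_sq, mul_comm (‖p‖ ^ 2)]
      congr 1
      refine Finset.sum_congr rfl fun i _ => ?_
      rw [real_inner_smul_right, real_inner_comm]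
      ring
    have hsum : ∑ i, (q i ^ 2 + 2) = (∑ i, q i ^ 2 - N) + 3 * N := by
      rw [Finset.sum_add_distrib, Finset.sum_const, Finset.card_univ, hN, nsmul_eq_mul]
      ring
    have e : weightedGram Finset.univ (fun i => q i ^ 2 + excess (z i)) z (3 * N) x
        = A x + (∑ i, q i ^ 2 - N) • x := by
      rw [hA, weightedGram_apply, weightedGram_apply, hsum, add_smul]; abel
    have h4 : |∑ i, q i ^ 2 - N| ≤ κ * N / ρ := hq2.trans (by
      rw [le_div_iff₀ hρ]
      have : 0 ≤ κ * N := by positivity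
      nlinarith)
    rw [e]
    calc _ ≤ ‖A x‖ + ‖(∑ i, q i ^ 2 - N) • x‖ := norm_add_le _ _
      _ ≤ 8 * (κ * N / ρ) * ‖x‖ + κ * N / ρ * ‖x‖ := by
        rw [norm_smul, Real.norm_eq_abs]; gcongr
      _ = _ := by ring
  · have h4 : ‖weightedCross Finset.univ (fun i => q i ^ 2 + excess (z i)) q z‖
        ≤ 2 * (κ * N / ρ / √L) := by
      refine hPlin _ _ fun p hp => le_trans (le_of_eq ?_) (hz4 p hp)
      rw [weightedCross, inner_sum]
      exact Finset.sum_congr rfl fun i _ => real_inner_smul_right _ _ _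
    calc _ ≤ 2 * (κ * N / ρ / √L) * √L := by gcongr
      _ = _ := by field_simp
  · intro i
    calc _ ≤ (1 + ρ * T) / ρ * (n + T) := by gcongr; exacts [hw i, hznorm i]
      _ = (1 + ρ * T) * (n + T) / ρ := by ring
      _ ≤ _ := by gcongr
  · intro i
    refine abs_le_of_sq_le_sq' ?_ (by positivity) |>.2
    calc (|q i ^ 2 + excess (z i)| * |q i| * ‖z i‖ * √L) ^ 2
        = |q i ^ 2 + excess (z i)| ^ 2 * q i ^ 2 * ‖z i‖ ^ 2 * L := by
          rw [mul_pow, mul_pow, mul_pow, sq_abs (q i), Real.sq_sqrt (by linarith)]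
      _ ≤ ((1 + ρ * T) / ρ) ^ 2 * (1 / ρ) * (n + T) * L := by
          have h0 : 0 ≤ n + T := (sq_nonneg _).trans (hznorm i)
          gcongr
          exacts [hw i, hq i, hznorm i]
      _ = (1 + ρ * T) ^ 2 * (n + T) * L * (1 / ρ ^ 3) := by field_simp
      _ ≤ κ ^ 2 * N * (1 / ρ ^ 3) := by gcongr
      _ ≤ κ ^ 2 * N * (1 / ρ ^ 3) * (ρ * N) := le_mul_of_one_le_right (by positivity) hρN
      _ = _ := by field_simp
  · intro i
    refine abs_le_of_sq_le_sq' ?_ (by positivity) |>.2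
    calc ‖z i‖ ^ 2 ≤ N := (hznorm i).trans h3
      _ ≤ (N : ℝ) ^ 2 := by nlinarith

lemma continuous_weightedCross {E ι : Type*} [NormedAddCommGroup E] [InnerProductSpace ℝ E]
    (s : Finset ι) (q : ι → ℝ) :
    Continuous fun z : ι → E => weightedCross s (fun i => q i ^ 2 + excess (z i)) q z := by
  have := continuous_excess (E := E)
  unfold weightedCross
  fun_prop

lemma continuous_weightedGram_pow {E ι : Type*} [NormedAddCommGroup E] [InnerProductSpace ℝ E]
    (s : Finset ι) (q : ι → ℝ) (c : ℝ) (m : ℕ) {r : (ι → E) → E} (hr : Continuous r) :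
    Continuous fun z : ι → E =>
      ((weightedGram s (fun i => q i ^ 2 + excess (z i)) z c) ^ m) (r z) := by
  have := continuous_excess (E := E)
  induction m with
  | zero => simpa using hr
  | succ m ih =>
    simp only [pow_succ', Module.End.mul_apply, weightedGram_apply] at ih ⊢
    fun_prop

lemma weightedCross_erase_update {E ι : Type*} [NormedAddCommGroup E] [InnerProductSpace ℝ E]
    [DecidableEq ι] (s : Finset ι) (j : ι) (q : ι → ℝ) (z : ι → E) (x : E) :
    weightedCross (s.erase j) (fun i => q i ^ 2 + excess (Function.update z j x i)) q
      (Function.update z j x)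
    = weightedCross (s.erase j) (fun i => q i ^ 2 + excess (z i)) q z := by
  refine Finset.sum_congr rfl fun i hi => ?_
  simp only [Function.update_of_ne (Finset.ne_of_mem_erase hi)]

lemma weightedGram_erase_update {E ι : Type*} [NormedAddCommGroup E] [InnerProductSpace ℝ E]
    [DecidableEq ι] (s : Finset ι) (j : ι) (q : ι → ℝ) (z : ι → E) (x : E) (c : ℝ) :
    weightedGram (s.erase j) (fun i => q i ^ 2 + excess (Function.update z j x i))
      (Function.update z j x) c
    = weightedGram (s.erase j) (fun i => q i ^ 2 + excess (z i)) z c := by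
  unfold weightedGram
  congr 1
  refine Finset.sum_congr rfl fun i hi => ?_
  simp only [Function.update_of_ne (Finset.ne_of_mem_erase hi)]

section NoiseProbability

variable {E ι : Type*} [NormedAddCommGroup E] [InnerProductSpace ℝ E] [FiniteDimensional ℝ E]
  [MeasurableSpace E] [BorelSpace E] [Fintype ι] {N : ℕ} {κ ρ δ n L T R : ℝ} {q : ι → ℝ}

lemma measure_pi_exists_lt_abs_excess_le (hN : Fintype.card ι = N) (hn : 1 ≤ n)
    (hE : (Module.finrank ℝ E : ℝ) ≤ n) (hL : 1 ≤ L) (hT : T = 16 * (√(n * L) + L))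
    (hX : N * Real.exp (-(3 * L)) ≤ δ / 100) (hδ : 0 < δ) :
    Measure.pi (fun _ : ι => stdGaussian E) {z | ∃ i, T < |excess (z i)|}
      ≤ ENNReal.ofReal (δ / 12) := by
  have hs : L / (4 * (√(n * L) + L)) ≤ 1 / 4 := by
    rw [div_le_div_iff₀ (by positivity) (by norm_num)]
    linarith [Real.sqrt_nonneg (n * L)]
  refine (measure_pi_exists_abs_excess_le (by positivity) hs).trans ?_
  rw [hN, ← ENNReal.ofReal_natCast, ← ENNReal.ofReal_ofNat 2,
    ← ENNReal.ofReal_mul (by norm_num), ← ENNReal.ofReal_mul (by positivity)]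
  apply ENNReal.ofReal_le_ofReal
  have h1 := Real.exp_le_exp.2 (two_mul_sq_mul_sub_mul_le hn hL hE hT)
  calc _ ≤ N * (2 * Real.exp (-(3 * L))) := by gcongr
    _ ≤ δ / 12 := by linarith

lemma measure_pi_lt_abs_sum_mul_excess_le (hN0 : 0 < (N : ℝ)) (hκ : 0 < κ) (hκ1 : κ ≤ 1)
    (hρ : 0 < ρ) (hn : 1 ≤ n) (hE : (Module.finrank ℝ E : ℝ) ≤ n)
    (hq : ∀ i, q i ^ 2 ≤ 1 / ρ) (hq4 : ∑ i, (q i ^ 2) ^ 2 ≤ 2 * N / ρ)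
    (hLn : 96 * (L + L * (n * ρ)) ≤ κ ^ 2 * N)
    (hX : Real.exp (-(3 * L)) ≤ δ / 100) (hδ : 0 < δ) :
    Measure.pi (fun _ : ι => stdGaussian E) {z | κ * N / ρ < |∑ i, q i ^ 2 * excess (z i)|}
      ≤ ENNReal.ofReal (δ / 12) := by
  set s : ℝ := κ * ρ / (8 * (1 + n * ρ)) with hs
  have hs0 : 0 < s := by positivity
  have hsq : ∀ i, |s * q i ^ 2| ≤ 1 / 4 := by
    intro i
    rw [abs_of_nonneg (by positivity)]
    calc _ ≤ s * (1 / ρ) := by gcongr; exact hq i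
      _ = κ / (8 * (1 + n * ρ)) := by rw [hs]; field_simp
      _ ≤ 1 / 4 := by
        rw [div_le_div_iff₀ (by positivity) (by norm_num)]
        linarith [mul_pos (show 0 < n by linarith) hρ]
  have hset : {z : ι → E | κ * N / ρ < |∑ i, q i ^ 2 * excess (z i)|}
      = {z | s * (κ * N / ρ) < |s * ∑ i, q i ^ 2 * excess (z i)|} := by
    ext z
    simp only [Set.mem_ofPred_eq, abs_mul, abs_of_pos hs0, mul_lt_mul_iff_right₀ hs0]
  rw [hset]
  refine (measure_pi_abs_sum_mul_excess_le _ hsq).trans ?_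
  rw [← ENNReal.ofReal_ofNat 2, ← ENNReal.ofReal_mul (by norm_num)]
  apply ENNReal.ofReal_le_ofReal
  have h1 := Real.exp_le_exp.2 (exponent_signal_le (L := L) hN0 hκ hρ hn hE
    (show 0 ≤ ∑ i, (q i ^ 2) ^ 2 by positivity) hq4 hLn)
  linarith

lemma measure_pi_quadratic_test_le (hN : Fintype.card ι = N) (hN0 : 0 < (N : ℝ)) (hκ : 0 < κ)
    (hκ1 : κ ≤ 1) (hρ : 0 < ρ) (hρ1 : ρ ≤ 1) (hT : 0 < T) (hn : 1 ≤ n)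
    (hE : (Module.finrank ℝ E : ℝ) ≤ n) (hL : 0 ≤ L) (hR : R = 1 / ρ + T)
    (hq4 : ∑ i, (q i ^ 2) ^ 2 ≤ 2 * N / ρ)
    (hLn : 19200000 * ((n + L) * (1 + ρ * T + n * ρ ^ 2)) ≤ κ ^ 2 * N)
    (hX : Real.exp (-(3 * L)) ≤ δ / 100) (hδ : 0 < δ) {P : Finset E}
    (hPcard : P.card ≤ 2 * 25 ^ Module.finrank ℝ E) (hPball : ∀ p ∈ P, ‖p‖ ≤ 1) {ε : ℝ}
    (hε : ε ^ 2 = 1) :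
    Measure.pi (fun _ : ι => stdGaussian E)
      (⋃ p ∈ P, {z | (∀ i, ε * (q i ^ 2 + excess (z i)) ≤ R) ∧
        κ * N / ρ ≤ ε * (∑ i, (q i ^ 2 + excess (z i)) * inner ℝ p (z i) ^ 2
          - ‖p‖ ^ 2 * ∑ i, (q i ^ 2 + 2))}) ≤ ENNReal.ofReal (δ / 12) := by
  have hR0 : 0 < R := by rw [hR]; positivity
  have hPexp := card_mul_exp_le (L := L) hPcard hE
  have hsR : κ / 2400000 / (R + n * ρ) * R ≤ 1 / 8 := by
    rw [div_mul_eq_mul_div, div_le_iff₀ (by positivity)]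
    have h1 : κ * R ≤ R := mul_le_of_le_one_left hR0.le hκ1
    linarith [mul_pos (show 0 < n by linarith) hρ]
  have hexp := Real.exp_le_exp.2 (exponent_quadratic_le (L := L)
    (A := ∑ i, ((q i ^ 2) ^ 2 + n)) hN0 hκ hρ hT hn hR hL hρ1 (by
      rw [Finset.sum_add_distrib, Finset.sum_const, Finset.card_univ, hN, nsmul_eq_mul]
      linarith) hLn)
  refine (measure_biUnion_finset_le _ _).trans ((Finset.sum_le_sum fun p hp =>
    (measure_pi_quadratic_le (fun i => q i ^ 2) hn hE (hPball p hp) hR0.le (by positivity)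
      hsR hε).trans (ENNReal.ofReal_le_ofReal hexp)).trans ?_)
  rw [Finset.sum_const, nsmul_eq_mul, ← ENNReal.ofReal_natCast,
    ← ENNReal.ofReal_mul (by positivity)]
  apply ENNReal.ofReal_le_ofReal
  linarith

lemma measure_pi_linear_test_le (hN0 : 0 < (N : ℝ)) (hκ : 0 < κ)
    (hρ : 0 < ρ) (hT : 0 < T)
    (hE : (Module.finrank ℝ E : ℝ) ≤ n) (hL : 0 < L) (hR : R = 1 / ρ + T)
    (hA : ∑ i, q i ^ 2 ≤ 2 * N)
    (hLn : 16 * (L * (n + L) * (1 + ρ * T) ^ 2) ≤ κ ^ 2 * N)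
    (hX : Real.exp (-(3 * L)) ≤ δ / 100) (hδ : 0 < δ) {P : Finset E}
    (hPcard : P.card ≤ 2 * 25 ^ Module.finrank ℝ E) (hPball : ∀ p ∈ P, ‖p‖ ≤ 1) :
    Measure.pi (fun _ : ι => stdGaussian E)
      (⋃ p ∈ P, {z | (∀ i, |q i ^ 2 + excess (z i)| ≤ R) ∧
        κ * N / ρ / √L ≤ ∑ i, (q i ^ 2 + excess (z i)) * q i * inner ℝ p (z i)})
      ≤ ENNReal.ofReal (δ / 12) := by
  have hR0 : 0 < R := by rw [hR]; positivity
  have hPexp := card_mul_exp_le (L := L) hPcard hE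
  have hs0 : 0 < κ * N / ρ / √L / (2 * (R ^ 2 * N)) := by positivity
  have hexp := Real.exp_le_exp.2 (exponent_linear_le (n := n) hN0 hκ hρ hT hR hL hA hLn)
  refine (measure_biUnion_finset_le _ _).trans ((Finset.sum_le_sum
    (g := fun _ => ENNReal.ofReal (Real.exp (-(4 * n + 3 * L)))) fun p hp => ?_).trans ?_)
  · refine le_trans (measure_mono ?_)
      ((measure_pi_linear_le q (hPball p hp)).trans (ENNReal.ofReal_le_ofReal hexp))
    exact fun z hz => ⟨hz.1, mul_le_mul_of_nonneg_left hz.2 hs0.le⟩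
  rw [Finset.sum_const, nsmul_eq_mul, ← ENNReal.ofReal_natCast,
    ← ENNReal.ofReal_mul (by positivity)]
  apply ENNReal.ofReal_le_ofReal
  linarith

lemma measure_pi_krylov_le [DecidableEq ι] (hN : Fintype.card ι = N) (hL : 0 < L)
    (hX : N * Real.exp (-(3 * L)) ≤ δ / 100) (hδ : 0 < δ) (hδ1 : δ ≤ 1) :
    Measure.pi (fun _ : ι => stdGaussian E) {z | ∃ i, ∃ m < N, 4 * √L *
      ‖((weightedGram (Finset.univ.erase i) (fun i => q i ^ 2 + excess (z i)) z (3 * N)) ^ m)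
        (weightedCross (Finset.univ.erase i) (fun i => q i ^ 2 + excess (z i)) q z)‖ <
      |inner ℝ (z i)
      (((weightedGram (Finset.univ.erase i) (fun i => q i ^ 2 + excess (z i)) z (3 * N)) ^ m)
        (weightedCross (Finset.univ.erase i) (fun i => q i ^ 2 + excess (z i)) q z))|}
      ≤ ENNReal.ofReal (δ / 12) := by
  refine (measure_pi_exists_lt_abs_inner_le (E := E) (ι := ι) (t := 4 * √L) (by positivity) N
    (fun j m z =>
      ((weightedGram (Finset.univ.erase j) (fun i => q i ^ 2 + excess (z i)) z (3 * N)) ^ m)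
        (weightedCross (Finset.univ.erase j) (fun i => q i ^ 2 + excess (z i)) q z))
    (fun j m => continuous_weightedGram_pow _ _ _ _ (continuous_weightedCross _ _))
    (fun j m z x => by rw [weightedGram_erase_update, weightedCross_erase_update])).trans ?_
  rw [hN, ← ENNReal.ofReal_natCast, ← ENNReal.ofReal_ofNat 2,
    ← ENNReal.ofReal_mul (by norm_num), ← ENNReal.ofReal_mul (by positivity),
    ← ENNReal.ofReal_mul (by positivity)]
  apply ENNReal.ofReal_le_ofReal
  have h1 : -((4 * √L) ^ 2 / 2) = -(8 * L) := by
    rw [mul_pow, Real.sq_sqrt hL.le]; ring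
  have h2 : Real.exp (-(8 * L)) ≤ Real.exp (-(3 * L)) * Real.exp (-(3 * L)) := by
    rw [← Real.exp_add]; apply Real.exp_le_exp.2; linarith
  rw [h1]
  calc _ ≤ N * (N * (2 * (Real.exp (-(3 * L)) * Real.exp (-(3 * L))))) := by gcongr
    _ = 2 * (N * Real.exp (-(3 * L))) * (N * Real.exp (-(3 * L))) := by ring
    _ ≤ 2 * (δ / 100) * (δ / 100) := by gcongr
    _ ≤ δ / 12 := by nlinarith

/-- The Gaussian part of the planted model satisfies `NoiseEvent` with high probability. -/
lemma measure_not_noiseEvent_le [DecidableEq ι] {c : ℝ} (hN : Fintype.card ι = N)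
    (hN10 : 10 ≤ (N : ℝ))
    (hκ : 0 < κ) (hκ1 : κ ≤ 1) (hρ : 0 < ρ) (hρ1 : ρ ≤ 1) (hρN : 1 ≤ ρ * N)
    (hδ : 0 < δ) (hδ1 : δ ≤ 1) (hn : 1 ≤ n)
    (hE : (Module.finrank ℝ E : ℝ) ≤ n) (hL : 1 ≤ L) (hLexp : Real.exp (-L) = δ / N)
    (hT : T = 16 * (√(n * L) + L)) (hc : c = κ ^ 2 / 100000000)
    (ha : L * (n + L) * (1 + ρ * T) ^ 2 ≤ c * N) (hb : (n + L) * (n * ρ ^ 2) ≤ c * N)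
    (hcc : L * (n * ρ) ≤ c * N)
    (hq : ∀ i, q i ^ 2 ≤ 1 / ρ) (hq2 : |∑ i, q i ^ 2 - N| ≤ κ * N)
    (hq4 : ∑ i, (q i ^ 2) ^ 2 ≤ 2 * N / ρ) :
    Measure.pi (fun _ : ι => stdGaussian E) {z | ¬ NoiseEvent q N (κ * N / ρ) L z}
      ≤ ENNReal.ofReal (δ / 2) := by
  obtain ⟨P, hPcard, hPball, hPsym, hPlin⟩ := exists_finset_test_vectors E
  have hL0 : 0 < L := by linarith
  have hN0 : (0 : ℝ) < N := by linarith
  have hc0 : 0 < c := by rw [hc]; positivity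
  have hcN : 100000000 * (c * N) = κ ^ 2 * N := by rw [hc]; ring
  have hcN0 : 0 < c * N := by positivity
  have hT0 : 0 < T := by rw [hT]; positivity
  have hρT : 1 ≤ 1 + ρ * T := by linarith [mul_pos hρ hT0]
  have hTn : n + T ≤ 33 * (n + L) := by
    have h1 : √(n * L) ≤ n + L := by
      rw [Real.sqrt_le_left (by positivity)]
      nlinarith
    rw [hT]; linarith
  have hκ2 : κ ^ 2 * N ≤ κ * N := by
    rw [sq, mul_assoc]; exact mul_le_of_le_one_left (by positivity) hκ1
  have hκ3 : κ * N ≤ N := mul_le_of_le_one_left hN0.le hκ1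
  have hA1 : ∑ i, q i ^ 2 ≤ 2 * N := by
    have := (abs_le.1 hq2).2
    linarith
  have ha1 : (n + L) * (1 + ρ * T) ≤ c * N := by
    refine le_trans ?_ ha
    rw [show L * (n + L) * (1 + ρ * T) ^ 2 = (n + L) * (1 + ρ * T) * (L * (1 + ρ * T)) by ring]
    exact le_mul_of_one_le_right (by positivity) (one_le_mul_of_one_le_of_one_le hL hρT)
  have ha2 : n + L ≤ c * N := (le_mul_of_one_le_right (by positivity) hρT).trans ha1
  have hNX : N * Real.exp (-(3 * L)) ≤ δ / 100 := by
    have hXe : Real.exp (-(3 * L)) = (δ / N) ^ 3 := by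
      rw [← hLexp, ← Real.exp_nat_mul]; congr 1; push_cast; ring
    have hx10 : δ / N ≤ 1 / 10 := by
      rw [div_le_iff₀ hN0]; linarith
    have h1 : N * (δ / N) ^ 3 = δ * (δ / N) ^ 2 := by field_simp
    rw [hXe, h1]
    calc _ ≤ δ * (1 / 10) ^ 2 := by gcongr
      _ = _ := by ring
  have hX1 : Real.exp (-(3 * L)) ≤ δ / 100 :=
    le_trans (le_mul_of_one_le_left (Real.exp_pos _).le (by linarith)) hNX
  have hquad : 19200000 * ((n + L) * (1 + ρ * T + n * ρ ^ 2)) ≤ κ ^ 2 * N := by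
    rw [mul_add (n + L)]; linarith
  have hB1 := measure_pi_exists_lt_abs_excess_le (E := E) hN hn hE hL hT hNX hδ
  have hB2 := measure_pi_lt_abs_sum_mul_excess_le (E := E) (L := L) hN0 hκ hκ1 hρ hn hE hq hq4
    (by linarith) hX1 hδ
  have hB3 := measure_pi_quadratic_test_le hN hN0 hκ hκ1 hρ hρ1 hT0 hn hE hL0.le rfl hq4
    hquad hX1 hδ hPcard hPball (ε := 1) (by norm_num)
  have hB3' := measure_pi_quadratic_test_le hN hN0 hκ hκ1 hρ hρ1 hT0 hn hE hL0.le rfl hq4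
    hquad hX1 hδ hPcard hPball (ε := -1) (by norm_num)
  have hB4 := measure_pi_linear_test_le hN0 hκ hρ hT0 hE hL0 rfl hA1
    (by linarith) hX1 hδ hPcard hPball
  have hB5 := measure_pi_krylov_le (E := E) (q := q) hN hL0 hNX hδ hδ1
  have hsum := (measure_union_le _ _).trans (add_le_add (((measure_union_le _ _).trans
    (add_le_add ((measure_union_le _ _).trans (add_le_add ((measure_union_le _ _).trans
      (add_le_add ((measure_union_le _ _).trans (add_le_add hB1 hB2)) hB3)) hB3')) hB4))) hB5)
  refine (measure_mono fun z hz => ?_).trans (hsum.trans (le_of_eq ?_))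
  · by_contra hcon
    simp only [Set.mem_union, not_or, Set.mem_iUnion, Set.mem_ofPred_eq, not_exists, not_and,
      not_lt, not_le, one_mul, neg_one_mul] at hcon
    obtain ⟨⟨⟨⟨⟨c1, c2⟩, c3⟩, c3'⟩, c4⟩, c5⟩ := hcon
    have hw : ∀ i, |q i ^ 2 + excess (z i)| ≤ 1 / ρ + T := fun i =>
      (abs_add_le _ _).trans (add_le_add (by rw [abs_of_nonneg (sq_nonneg _)]; exact hq i) (c1 i))
    refine hz (noiseEvent_of_test_vectors hN (by linarith) hκ hρ hρ1 hρN hT0 hL hE hq hq2 hPsym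
      hPlin ?_ ?_ ?_ c1 c2 ?_ ?_ c5)
    · calc (1 + ρ * T) * (n + T) ≤ (1 + ρ * T) * (33 * (n + L)) := by gcongr
        _ ≤ κ * N := by linarith
    · calc (1 + ρ * T) ^ 2 * (n + T) * L ≤ (1 + ρ * T) ^ 2 * (33 * (n + L)) * L := by gcongr
        _ ≤ κ ^ 2 * N := by linarith
    · linarith
    · exact fun p hp => abs_le.2
        ⟨by linarith [c3' p hp fun i => (neg_le_abs _).trans (hw i)],
          (c3 p hp fun i => (le_abs_self _).trans (hw i)).le⟩
    · exact fun p hp => (c4 p hp hw).le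
  · rw [← ENNReal.ofReal_add (by positivity) (by positivity),
      ← ENNReal.ofReal_add (by positivity) (by positivity),
      ← ENNReal.ofReal_add (by positivity) (by positivity),
      ← ENNReal.ofReal_add (by positivity) (by positivity),
      ← ENNReal.ofReal_add (by positivity) (by positivity)]
    congr 1; ring

end NoiseProbability

/-- The smallness assumptions on `n`, `ρ` and `L = log (N / δ)`, in the form used by the
concentration estimates. -/
lemma smallness_bounds {N n ρ L T c c₃ : ℝ} (hc0 : 0 < c) (hc1 : c ≤ 1) (hc₃ : c₃ = c / 4100)
    (hN : 1 ≤ N) (hn : 1 ≤ n) (hρ : 0 < ρ) (hρ1 : ρ ≤ 1) (hL1 : 1 ≤ L) (hL : 1 ≤ c₃ ^ 2 * L)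
    (hL7 : L ^ 7 ≤ N) (hsmall : (n * ρ / √N + √(n / N)) * L ≤ c₃)
    (hT : T = 16 * (√(n * L) + L)) :
    L * (n + L) * (1 + ρ * T) ^ 2 ≤ c * N ∧ (n + L) * (n * ρ ^ 2) ≤ c * N ∧
      L * (n * ρ) ≤ c * N := by
  have hN0 : 0 < N := by linarith
  have hsN : 0 < √N := Real.sqrt_pos.2 hN0
  have hc₃0 : 0 < c₃ := by rw [hc₃]; positivity
  have hc₃1 : c₃ ≤ 1 := by rw [hc₃]; linarith
  have hcc : 4100 * (c₃ * N) = c * N := by rw [hc₃]; ring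
  have hcc0 : 0 < c₃ * N := by positivity
  have hcsq : c₃ ^ 2 * N ≤ c₃ * N := by
    rw [sq, mul_assoc]; exact mul_le_of_le_one_left (by positivity) hc₃1
  have h1 : n * ρ * L ≤ c₃ * √N := by
    have : n * ρ / √N * L ≤ c₃ := by
      have : 0 ≤ √(n / N) * L := by positivity
      linarith
    rwa [div_mul_eq_mul_div, div_le_iff₀ hsN] at this
  have h2 : n * L ^ 2 ≤ c₃ ^ 2 * N := by
    have h3 : √(n / N) * L ≤ c₃ := by
      have : 0 ≤ n * ρ / √N * L := by positivity
      linarith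
    have h4 : (√(n / N) * L) ^ 2 ≤ c₃ ^ 2 := by gcongr
    rwa [mul_pow, Real.sq_sqrt (by positivity), div_mul_eq_mul_div, div_le_iff₀ hN0] at h4
  have h3 : (n * ρ * L) ^ 2 ≤ c₃ ^ 2 * N := by
    calc _ ≤ (c₃ * √N) ^ 2 := by gcongr
      _ = _ := by rw [mul_pow, Real.sq_sqrt hN0.le]
  have h4 : L ^ 4 ≤ c₃ ^ 2 * N := by
    calc L ^ 4 ≤ L ^ 4 * (c₃ ^ 2 * L) := le_mul_of_one_le_right (by positivity) hL
      _ = c₃ ^ 2 * L ^ 5 := by ring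
      _ ≤ c₃ ^ 2 * L ^ 7 := by gcongr; norm_num
      _ ≤ _ := by gcongr
  have h5 : n * ρ * L ≤ c₃ * N := h1.trans (by
    gcongr; exact Real.sqrt_le_left (by positivity) |>.2 (by nlinarith))
  refine ⟨?_, ?_, by linarith⟩
  · have h6 : (1 + ρ * T) ^ 2 ≤ 2 + ρ ^ 2 * (1024 * (L * (n + L))) := by
      have hsq := Real.sq_sqrt (show 0 ≤ n * L by positivity)
      have h7 : T ^ 2 ≤ 512 * (L * (n + L)) := by
        rw [hT]; nlinarith [sq_nonneg (√(n * L) - L)]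
      have h8 : ρ ^ 2 * T ^ 2 ≤ ρ ^ 2 * (512 * (L * (n + L))) := by gcongr
      nlinarith [sq_nonneg (1 - ρ * T)]
    have h9 : L * n ≤ c₃ * N := by
      calc L * n ≤ L * n * L := le_mul_of_one_le_right (by positivity) hL1
        _ = n * L ^ 2 := by ring
        _ ≤ _ := h2.trans hcsq
    have h10 : L ^ 2 ≤ L ^ 4 := pow_le_pow_right₀ hL1 (by norm_num)
    have h11 : ρ ^ 2 * L ^ 4 ≤ L ^ 4 :=
      mul_le_of_le_one_left (by positivity) (pow_le_one₀ hρ.le hρ1)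
    calc L * (n + L) * (1 + ρ * T) ^ 2
        ≤ L * (n + L) * (2 + ρ ^ 2 * (1024 * (L * (n + L)))) := by gcongr
      _ = 2 * (L * n) + 2 * L ^ 2 + 1024 * (ρ ^ 2 * L ^ 2) * (n + L) ^ 2 := by ring
      _ ≤ 2 * (L * n) + 2 * L ^ 2 + 1024 * (ρ ^ 2 * L ^ 2) * (2 * (n ^ 2 + L ^ 2)) := by
          gcongr; nlinarith [sq_nonneg (n - L)]
      _ = 2 * (L * n) + 2 * L ^ 2 + 2048 * (n * ρ * L) ^ 2 + 2048 * (ρ ^ 2 * L ^ 4) := by ring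
      _ ≤ c * N := by linarith
  · have h6 : (n * ρ) ^ 2 ≤ (n * ρ * L) ^ 2 := by
      exact pow_le_pow_left₀ (by positivity) (le_mul_of_one_le_right (by positivity) hL1) 2
    have h7 : ρ * (n * ρ * L) ≤ n * ρ * L := mul_le_of_le_one_left (by positivity) hρ1
    calc _ = (n * ρ) ^ 2 + ρ * (n * ρ * L) := by ring
      _ ≤ c * N := by linarith

lemma isProbabilityMeasure_brMeasure (N : ℕ) {ρ : ℝ} (hρ : 0 ≤ ρ) (hρ1 : ρ ≤ 1) :
    IsProbabilityMeasure (brMeasure N ρ) := by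
  constructor
  have h : (1 - ρ).toNNReal + (ρ / 2).toNNReal + (ρ / 2).toNNReal = 1 := by
    rw [← Real.toNNReal_add (by linarith) (by linarith),
      ← Real.toNNReal_add (by linarith) (by linarith), ← Real.toNNReal_one]
    congr 1; ring
  simp only [brMeasure, Measure.add_apply, Measure.smul_apply, measure_univ, ENNReal.smul_def,
    smul_eq_mul, mul_one]
  exact_mod_cast h

lemma ae_brMeasure (N : ℕ) (ρ : ℝ) :
    ∀ᵐ x ∂brMeasure N ρ, x = 0 ∨ x = (√(N * ρ))⁻¹ ∨ x = -(√(N * ρ))⁻¹ := by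
  have hm : ∀ p : ℝ → Prop, ∀ c : NNReal, ∀ x, p x → ∀ᵐ y ∂(c • Measure.dirac x), p y :=
    fun p c x hx => Measure.ae_smul_measure ((ae_dirac_eq x).symm ▸ hx) c
  simp only [brMeasure, ae_add_measure_iff]
  exact ⟨⟨hm _ _ _ (by simp), hm _ _ _ (by simp)⟩, hm _ _ _ (by simp)⟩

lemma lintegral_exp_brMeasure_le {N : ℕ} {ρ s : ℝ} (hN : 0 < (N : ℝ)) (hρ : 0 < ρ)
    (hρ1 : ρ ≤ 1) (hs : |s| ≤ 1) :
    ∫⁻ x, ENNReal.ofReal (Real.exp (s * (x ^ 2 * (N * ρ) - ρ))) ∂brMeasure N ρ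
      ≤ ENNReal.ofReal (Real.exp (ρ * s ^ 2)) := by
  have hNρ : 0 < N * ρ := by positivity
  have h1 : (√(N * ρ))⁻¹ ^ 2 * (N * ρ) = 1 := by
    rw [inv_pow, Real.sq_sqrt hNρ.le, inv_mul_cancel₀ hNρ.ne']
  have hcast : ∀ x : ℝ, ((x.toNNReal : NNReal) : ENNReal) = ENNReal.ofReal x := fun x => rfl
  simp only [brMeasure, lintegral_add_measure, lintegral_smul_measure, lintegral_dirac, neg_sq, h1,
    ENNReal.smul_def, smul_eq_mul, hcast]
  rw [← ENNReal.ofReal_mul (by linarith), ← ENNReal.ofReal_mul (by linarith),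
    ← ENNReal.ofReal_add (mul_nonneg (by linarith) (Real.exp_pos _).le) (by positivity),
    ← ENNReal.ofReal_add (add_nonneg (mul_nonneg (by linarith) (Real.exp_pos _).le)
      (by positivity)) (by positivity)]
  apply ENNReal.ofReal_le_ofReal
  have e1 : Real.exp (s * (0 ^ 2 * (N * ρ) - ρ)) = Real.exp (-(s * ρ)) := by congr 1; ring
  have e2 : Real.exp (s * (1 - ρ)) = Real.exp (-(s * ρ)) * Real.exp s := by
    rw [← Real.exp_add]; congr 1; ring
  have h2 := (abs_le.1 (Real.abs_exp_sub_one_sub_id_le hs)).2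
  have h3 : 1 - ρ + ρ * Real.exp s ≤ Real.exp (ρ * (s + s ^ 2)) := by
    have h4 := Real.add_one_le_exp (ρ * (s + s ^ 2))
    nlinarith
  rw [e1, e2]
  calc _ = Real.exp (-(s * ρ)) * (1 - ρ + ρ * Real.exp s) := by ring
    _ ≤ Real.exp (-(s * ρ)) * Real.exp (ρ * (s + s ^ 2)) := by gcongr
    _ = _ := by rw [← Real.exp_add]; congr 1; ring

lemma brVec_le_sum_le {N : ℕ} {ρ κ ε : ℝ} (hN : 0 < (N : ℝ)) (hρ : 0 < ρ) (hρ1 : ρ ≤ 1)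
    (hκ : 0 ≤ κ) (hκ1 : κ ≤ 1) (hε : |ε| = 1) :
    brVec N ρ {v | κ * (N * ρ) ≤ ε * ∑ i, (v i ^ 2 * (N * ρ) - ρ)}
      ≤ ENNReal.ofReal (Real.exp (-(κ ^ 2 * (N * ρ) / 4))) := by
  have := isProbabilityMeasure_brMeasure N hρ.le hρ1
  have hs : |ε * κ / 2| ≤ 1 := by
    rw [abs_div, abs_mul, hε, abs_of_nonneg hκ, abs_of_pos (by norm_num : (0 : ℝ) < 2)]
    linarith
  have hε2 : ε ^ 2 = 1 := by rw [← sq_abs, hε, one_pow]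
  have h := measure_pi_le_sum_le (fun _ : Fin N => brMeasure N ρ)
    (fun _ x => ε * κ / 2 * (x ^ 2 * (N * ρ) - ρ)) (fun _ => by fun_prop) (fun _ => Set.univ)
    (fun _ => MeasurableSet.univ) (fun _ => ρ * (ε * κ / 2) ^ 2) (κ / 2 * (κ * (N * ρ)))
    (fun _ => by simpa using lintegral_exp_brMeasure_le hN hρ hρ1 hs)
  refine (measure_mono ?_).trans (h.trans (le_of_eq ?_))
  · intro v hv
    refine ⟨fun i => Set.mem_univ _, ?_⟩
    rw [← Finset.mul_sum]
    calc κ / 2 * (κ * (N * ρ)) ≤ κ / 2 * (ε * ∑ i, (v i ^ 2 * (N * ρ) - ρ)) := by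
          exact mul_le_mul_of_nonneg_left hv (by positivity)
      _ = _ := by ring
  · rw [Finset.sum_const, Finset.card_univ, Fintype.card_fin, nsmul_eq_mul, div_pow, mul_pow, hε2]
    congr 2; ring

/-- A Bernoulli–Rademacher vector whose support has nearly the expected size. -/
def IsTypical (N : ℕ) (ρ κ : ℝ) (v : Fin N → ℝ) : Prop :=
  (∀ i, v i = 0 ∨ v i = (√(N * ρ))⁻¹ ∨ v i = -(√(N * ρ))⁻¹) ∧
    |∑ i, (v i ^ 2 * (N * ρ) - ρ)| ≤ κ * (N * ρ)

lemma brVec_not_isTypical_le {N : ℕ} {ρ κ δ : ℝ} (hN : 0 < (N : ℝ)) (hρ : 0 < ρ) (hρ1 : ρ ≤ 1)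
    (hκ : 0 ≤ κ) (hκ1 : κ ≤ 1) (hδ : 0 < δ) (hδ2 : δ < 1 / 2)
    (h : 12 * Real.log (1 / δ) ≤ κ ^ 2 * (N * ρ)) :
    brVec N ρ {v | ¬ IsTypical N ρ κ v} ≤ ENNReal.ofReal (δ / 2) := by
  have := isProbabilityMeasure_brMeasure N hρ.le hρ1
  have h0 : brVec N ρ {v | ¬ ∀ i, v i = 0 ∨ v i = (√(N * ρ))⁻¹ ∨ v i = -(√(N * ρ))⁻¹} = 0 := by
    rw [← ae_iff, ae_all_iff]
    exact fun i => (measurePreserving_eval (fun _ : Fin N => brMeasure N ρ)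
      i).quasiMeasurePreserving.ae (ae_brMeasure N ρ)
  have h1 := brVec_le_sum_le hN hρ hρ1 hκ hκ1 (ε := 1) (by norm_num)
  have h2 := brVec_le_sum_le hN hρ hρ1 hκ hκ1 (ε := -1) (by norm_num)
  have he : Real.exp (-(κ ^ 2 * (N * ρ) / 4)) ≤ δ / 4 := by
    calc _ ≤ Real.exp (3 * Real.log δ) := by
          rw [one_div, Real.log_inv] at h
          gcongr; linarith
      _ = δ ^ 3 := by
          rw [show (3 : ℝ) = (3 : ℕ) by norm_num, Real.exp_nat_mul, Real.exp_log hδ]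
      _ = δ * δ ^ 2 := by ring
      _ ≤ δ * (1 / 2) ^ 2 := by gcongr
      _ = _ := by ring
  have hsum := (measure_union_le _ _).trans (add_le_add h0.le ((measure_union_le _ _).trans
    (add_le_add (h1.trans (ENNReal.ofReal_le_ofReal he))
      (h2.trans (ENNReal.ofReal_le_ofReal he)))))
  refine (measure_mono fun v hv => ?_).trans (hsum.trans (le_of_eq ?_))
  · by_contra hcon
    simp only [Set.mem_union, not_or, Set.mem_ofPred_eq, not_not, not_le, one_mul,
      neg_one_mul] at hcon
    exact hv ⟨hcon.1, abs_le.2 ⟨by linarith [hcon.2.2], hcon.2.1.le⟩⟩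
  · rw [zero_add, ← ENNReal.ofReal_add (by positivity) (by positivity)]
    congr 1; ring

lemma eucNorm_eq_sqrt_dotProduct {k : ℕ} (x : Fin k → ℝ) : eucNorm x = √(x ⬝ᵥ x) := by
  simp only [eucNorm, dotProduct, sq]

lemma specMat_mulVec {N n : ℕ} (Y : Matrix (Fin N) (Fin n) ℝ) (x : Fin n → ℝ) :
    specMat Y *ᵥ x
      = ∑ i, ((Y i ⬝ᵥ Y i - ((n : ℝ) - 1) / N) * (Y i ⬝ᵥ x)) • Y i - ((3 : ℝ) / N) • x := by
  rw [specMat, sub_mulVec, sum_mulVec, smul_mulVec, one_mulVec]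
  congr 1
  refine Finset.sum_congr rfl fun i _ => ?_
  rw [smul_mulVec, vecMulVec_mulVec, op_smul_eq_smul, smul_smul]
  simp only [dotProduct, sq]

lemma specMat_isHermitian {N n : ℕ} (Y : Matrix (Fin N) (Fin n) ℝ) : (specMat Y).IsHermitian := by
  ext j k
  simp only [specMat, conjTranspose_apply, star_trivial, Matrix.sub_apply, Matrix.sum_apply,
    Matrix.smul_apply, vecMulVec_apply, Matrix.one_apply, eq_comm (a := k) (b := j),
    mul_comm (Y _ k)]

/-- Right multiplication by an orthogonal matrix conjugates the spectral matrix. -/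
lemma mulVec_specMat_mul_orthogonal {N n : ℕ} (Y : Matrix (Fin N) (Fin n) ℝ)
    {Q : Matrix (Fin n) (Fin n) ℝ} (hQ : Qᵀ * Q = 1) (x : Fin n → ℝ) :
    Q *ᵥ (specMat (Y * Q) *ᵥ x) = specMat Y *ᵥ (Q *ᵥ x) := by
  have hQ' : Q * Qᵀ = 1 := mul_eq_one_comm.1 hQ
  have h1 : ∀ i, Q *ᵥ ((Y * Q) i) = Y i := by
    intro i
    rw [mul_apply_eq_vecMul, ← mulVec_transpose, mulVec_mulVec, hQ', one_mulVec]
  have h2 : ∀ i y, (Y * Q) i ⬝ᵥ y = Y i ⬝ᵥ (Q *ᵥ y) := by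
    intro i y
    rw [mul_apply_eq_vecMul, dotProduct_mulVec]
  rw [specMat_mulVec, specMat_mulVec, mulVec_sub, mulVec_sum, mulVec_smul]
  congr 1
  refine Finset.sum_congr rfl fun i _ => ?_
  rw [mulVec_smul, h1, h2, h2, h1]

lemma isLeadingEigen_mulVec_orthogonal {N n : ℕ} {Y : Matrix (Fin N) (Fin n) ℝ}
    {Q : Matrix (Fin n) (Fin n) ℝ} (hQ : Qᵀ * Q = 1) {u : Fin n → ℝ}
    (hu : IsLeadingEigen (specMat (Y * Q)) u) : IsLeadingEigen (specMat Y) (Q *ᵥ u) := by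
  have hQ' : Q * Qᵀ = 1 := mul_eq_one_comm.1 hQ
  obtain ⟨h1, μ, h2, h3⟩ := hu
  refine ⟨?_, μ, ?_, fun μ' ⟨w, hw0, hw⟩ => h3 μ' ⟨Qᵀ *ᵥ w, fun h => hw0 ?_, ?_⟩⟩
  · rw [eucNorm_eq_sqrt_dotProduct] at h1 ⊢
    rw [dotProduct_mulVec, ← mulVec_transpose, mulVec_mulVec, hQ, one_mulVec, h1]
  · rw [← mulVec_specMat_mul_orthogonal Y hQ, h2, mulVec_smul]
  · rw [← one_mulVec w, ← hQ', ← mulVec_mulVec, h, mulVec_zero]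
  · have h4 := mulVec_specMat_mul_orthogonal Y hQ (Qᵀ *ᵥ w)
    have h5 : Q *ᵥ (Qᵀ *ᵥ w) = w := by rw [mulVec_mulVec, hQ', one_mulVec]
    rw [h5, hw] at h4
    rw [← one_mulVec (specMat (Y * Q) *ᵥ (Qᵀ *ᵥ w)), ← hQ, ← mulVec_mulVec, h4, mulVec_smul]

/-- The diagonal entries of a symmetric matrix are bounded by its largest eigenvalue. -/
lemma abs_apply_self_le_of_eigenvalues {ι : Type*} [Fintype ι] [DecidableEq ι]
    {M : Matrix ι ι ℝ} (hM : M.IsHermitian) {m : ℝ}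
    (h : ∀ μ : ℝ, (∃ w : ι → ℝ, w ≠ 0 ∧ M *ᵥ w = μ • w) → |μ| ≤ m) (i : ι) :
    |M i i| ≤ m := by
  have hev : ∀ k, |hM.eigenvalues k| ≤ m := fun k =>
    h _ ⟨hM.eigenvectorBasis k, fun h0 => hM.eigenvectorBasis.toBasis.ne_zero k (by
      ext j; simpa using congrFun h0 j), hM.mulVec_eigenvectorBasis k⟩
  set U := hM.eigenvectorUnitary with hU
  have hsum : ∑ k, (U : Matrix ι ι ℝ) i k ^ 2 = 1 := by
    have h1 : (U : Matrix ι ι ℝ) * star (U : Matrix ι ι ℝ) = 1 := Unitary.coe_mul_star_self U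
    have h2 := congrFun (congrFun h1 i) i
    rw [Matrix.mul_apply, Matrix.one_apply_eq] at h2
    simpa [Matrix.star_apply, sq] using h2
  have hMi : M i i = ∑ k, hM.eigenvalues k * (U : Matrix ι ι ℝ) i k ^ 2 := by
    have h1 := congrFun (congrFun hM.spectral_theorem i) i
    rw [h1, Unitary.conjStarAlgAut_apply, Matrix.mul_apply]
    refine Finset.sum_congr rfl fun k _ => ?_
    rw [Matrix.mul_diagonal, Matrix.star_apply]
    simp [hU]; ring
  rw [hMi]
  calc _ ≤ ∑ k, |hM.eigenvalues k * (U : Matrix ι ι ℝ) i k ^ 2| :=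
        Finset.abs_sum_le_sum_abs _ _
    _ ≤ ∑ k, m * (U : Matrix ι ι ℝ) i k ^ 2 := by
        refine Finset.sum_le_sum fun k _ => ?_
        rw [abs_mul, abs_of_nonneg (sq_nonneg ((U : Matrix ι ι ℝ) i k))]
        gcongr; exact hev k
    _ = m := by rw [← Finset.mul_sum, hsum, mul_one]

/-- Rounding an approximation of `± x`, where `x ∈ {0, a, -a}`, recovers `x`. -/
lemma mul_sign_mul_indicator_eq {a x y s : ℝ} (ha : 0 < a) (hx : x = 0 ∨ x = a ∨ x = -a)
    (hs : s = 1 ∨ s = -1) (h : |y - s * x| < 0.5 * a) :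
    a * Real.sign (s * y) * Set.indicator {t : ℝ | 0.5 * a ≤ |t|} 1 y = x := by
  obtain ⟨h1, h2⟩ := abs_lt.1 h
  norm_num at h1 h2 ⊢
  rcases hx with rfl | rfl | rfl
  · rw [Set.indicator_of_notMem, mul_zero]
    rw [Set.mem_ofPred_eq, not_le, abs_lt]
    constructor <;> linarith
  · rw [Set.indicator_of_mem]
    · rcases hs with rfl | rfl
      · rw [Real.sign_of_pos (by linarith)]; simp
      · rw [Real.sign_of_pos (by linarith)]; simp
    · rw [Set.mem_ofPred_eq, le_abs]
      rcases hs with rfl | rfl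
      · left; linarith
      · right; linarith
  · rw [Set.indicator_of_mem]
    · rcases hs with rfl | rfl
      · rw [Real.sign_of_neg (by linarith)]; simp
      · rw [Real.sign_of_neg (by linarith)]; simp
    · rw [Set.mem_ofPred_eq, le_abs]
      rcases hs with rfl | rfl
      · right; linarith
      · left; linarith

lemma IsTypical.scaled_bounds {N : ℕ} {ρ κ : ℝ} {v : Fin N → ℝ} (hN : 0 < (N : ℝ)) (hρ : 0 < ρ)
    (h : IsTypical N ρ κ v) :
    (∀ i, (√N * v i) ^ 2 ≤ 1 / ρ) ∧ |∑ i, (√N * v i) ^ 2 - N| ≤ κ * N ∧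
      ∑ i, ((√N * v i) ^ 2) ^ 2 = (∑ i, (√N * v i) ^ 2) / ρ := by
  have hsq : ∀ x : ℝ, (√N * x) ^ 2 = N * x ^ 2 := fun x => by
    rw [mul_pow, Real.sq_sqrt hN.le]
  have hNρ : 0 < N * ρ := by positivity
  have ha : (√(N * ρ))⁻¹ ^ 2 = (N * ρ)⁻¹ := by rw [inv_pow, Real.sq_sqrt hNρ.le]
  have hv : ∀ i, v i ^ 2 = 0 ∨ v i ^ 2 = (N * ρ)⁻¹ := by
    intro i
    rcases h.1 i with h0 | h0 | h0
    · left; rw [h0]; ring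
    · right; rw [h0, ha]
    · right; rw [h0, neg_sq, ha]
  refine ⟨fun i => ?_, ?_, ?_⟩
  · rw [hsq]
    rcases hv i with h0 | h0
    · rw [h0, mul_zero]; positivity
    · rw [h0]; apply le_of_eq; field_simp
  · have h1 : ∑ i, (v i ^ 2 * (N * ρ) - ρ) = ρ * (∑ i, (√N * v i) ^ 2 - N) := by
      simp only [hsq]
      rw [Finset.sum_sub_distrib, ← Finset.sum_mul, ← Finset.mul_sum, Finset.sum_const,
        Finset.card_univ, Fintype.card_fin, nsmul_eq_mul]
      ring
    have h2 := h.2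
    rw [h1, abs_mul, abs_of_pos hρ] at h2
    refine le_of_mul_le_mul_left (h2.trans (le_of_eq ?_)) hρ
    ring
  · rw [Finset.sum_div]
    refine Finset.sum_congr rfl fun i _ => ?_
    rw [hsq]
    rcases hv i with h0 | h0
    · rw [h0]; ring
    · rw [h0]; field_simp

/-- The Gaussian coordinates of the rows, rescaled to unit variance. -/
noncomputable def scaledRows {N m : ℕ} (B : Fin N → Fin m → ℝ) (i : Fin N) :
    EuclideanSpace ℝ (Fin m) := WithLp.toLp 2 (√N • B i)

lemma norm_scaledRows_sq {N m : ℕ} (B : Fin N → Fin m → ℝ) (i : Fin N) :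
    ‖scaledRows B i‖ ^ 2 = N * (B i ⬝ᵥ B i) := by
  rw [EuclideanSpace.real_norm_sq_eq, dotProduct, Finset.mul_sum]
  refine Finset.sum_congr rfl fun j _ => ?_
  rw [scaledRows, PiLp.toLp_apply, Pi.smul_apply, smul_eq_mul, mul_pow, Real.sq_sqrt (by positivity)]
  ring

lemma inner_scaledRows {N m : ℕ} (B : Fin N → Fin m → ℝ) (i : Fin N) (x : Fin m → ℝ) :
    inner ℝ (scaledRows B i) (WithLp.toLp 2 x) = √N * (B i ⬝ᵥ x) := by
  rw [scaledRows, EuclideanSpace.inner_toLp_toLp, star_trivial, dotProduct_smul, smul_eq_mul,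
    dotProduct_comm]

lemma gaussBasis_dotProduct {N m : ℕ} (v : Fin N → ℝ) (B : Fin N → Fin m → ℝ) (i : Fin N)
    (x : Fin (m + 1) → ℝ) :
    gaussBasis (n := m + 1) v B i ⬝ᵥ x = v i * x 0 + B i ⬝ᵥ fun j => x j.succ := by
  rw [dotProduct, Fin.sum_univ_succ]
  rfl

lemma mul_specMat_weight {N m : ℕ} (hN : 0 < (N : ℝ)) (v : Fin N → ℝ) (B : Fin N → Fin m → ℝ)
    (i : Fin N) :
    N * (gaussBasis (n := m + 1) v B i ⬝ᵥ gaussBasis (n := m + 1) v B i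
      - (((m + 1 : ℕ) : ℝ) - 1) / N) = (√N * v i) ^ 2 + excess (scaledRows B i) := by
  rw [gaussBasis_dotProduct, excess, norm_scaledRows_sq, finrank_euclideanSpace, Fintype.card_fin,
    mul_pow, Real.sq_sqrt hN.le]
  have h1 : gaussBasis (n := m + 1) v B i 0 = v i := rfl
  have h2 : (fun j : Fin m => gaussBasis (n := m + 1) v B i j.succ) = B i := rfl
  rw [h1, h2]
  push_cast
  field_simp
  ring

/-- Exact recovery on the event where the planted vector and the noise are well-behaved. -/
lemma exact_recovery_of_noiseEvent {N m : ℕ} {ρ κ L : ℝ} {v : Fin N → ℝ}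
    {B : Fin N → Fin m → ℝ} {Q : Matrix (Fin (m + 1)) (Fin (m + 1)) ℝ} (hQ : Qᵀ * Q = 1)
    (hN : 0 < (N : ℝ)) (hρ : 0 < ρ) (hρ1 : ρ ≤ 1) (hκ : 0 < κ) (hL : 1 ≤ L)
    (hgap : 100 * κ ≤ |ρ - 1 / 3|) (hv : IsTypical N ρ κ v)
    (hz : NoiseEvent (fun i => √N * v i) N (κ * N / ρ) L (scaledRows B))
    {u : Fin (m + 1) → ℝ} (hu : IsLeadingEigen (specMat (gaussBasis (n := m + 1) v B * Q)) u) :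
    ∃ s : ℝ, (s = 1 ∨ s = -1) ∧ ∀ j : Fin N,
      (√(N * ρ))⁻¹ * Real.sign (s * ((gaussBasis (n := m + 1) v B * Q) *ᵥ u) j)
        * Set.indicator {x : ℝ | 0.5 * (√(N * ρ))⁻¹ ≤ |x|} 1 (((gaussBasis (n := m + 1) v B * Q) *ᵥ u) j)
      = v j := by
  have hsN : 0 < √N := Real.sqrt_pos.2 hN
  have hsN2 : √N * √N = N := Real.mul_self_sqrt hN.le
  obtain ⟨hq, hq2, hq4⟩ := hv.scaled_bounds hN hρ
  set Y : Matrix (Fin N) (Fin (m + 1)) ℝ := gaussBasis v B with hY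
  obtain ⟨hnorm, μ, hμ, hmax⟩ := isLeadingEigen_mulVec_orthogonal hQ hu
  set x := Q *ᵥ u with hx
  set x' : Fin m → ℝ := fun j => x j.succ with hx'
  set q : Fin N → ℝ := fun i => √N * v i with hqdef
  replace hq2 : |∑ i, q i ^ 2 - N| ≤ κ * N := hq2
  replace hq4 : ∑ i, (q i ^ 2) ^ 2 = (∑ i, q i ^ 2) / ρ := hq4
  set w : Fin N → ℝ := fun i => q i ^ 2 + excess (scaledRows B i) with hw
  have hw' : ∀ i, N * (Y i ⬝ᵥ Y i - (((m + 1 : ℕ) : ℝ) - 1) / N) = w i :=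
    fun i => mul_specMat_weight hN v B i
  have hYx : ∀ i, √N * (Y i ⬝ᵥ x) = q i * x 0 + inner ℝ (scaledRows B i) (WithLp.toLp 2 x') := by
    intro i
    rw [hY, gaussBasis_dotProduct, inner_scaledRows, hqdef]
    ring
  have hspec : ∀ j, (N : ℝ) ^ 2 * (specMat Y *ᵥ x) j
      = ∑ i, w i * (√N * (Y i ⬝ᵥ x)) * (√N * Y i j) - 3 * N * x j := by
    intro j
    rw [specMat_mulVec, Pi.sub_apply, Finset.sum_apply, mul_sub, Finset.mul_sum]
    congr 1
    · refine Finset.sum_congr rfl fun i _ => ?_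
      rw [← hw' i, Pi.smul_apply, smul_eq_mul, sq]
      linear_combination (N * (Y i ⬝ᵥ Y i - (((m + 1 : ℕ) : ℝ) - 1) / N) * (Y i ⬝ᵥ x) * Y i j) *
        (-hsN2)
    · rw [Pi.smul_apply, smul_eq_mul]; field_simp
  have hdiag : (N : ℝ) ^ 2 * specMat Y 0 0 = ∑ i, w i * q i ^ 2 - 3 * N := by
    have h1 : specMat Y 0 0 = (specMat Y *ᵥ Pi.single 0 1) 0 := by
      rw [mulVec_single_one, Matrix.col_apply]
    rw [h1, specMat_mulVec, Pi.sub_apply, Finset.sum_apply, mul_sub, Finset.mul_sum]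
    congr 1
    · refine Finset.sum_congr rfl fun i _ => ?_
      have h2 : Y i 0 = v i := rfl
      rw [← hw' i, Pi.smul_apply, smul_eq_mul, dotProduct_single, mul_one, h2, hqdef, mul_pow,
        Real.sq_sqrt hN.le]
      ring
    · rw [Pi.smul_apply, smul_eq_mul, Pi.single_eq_same]; field_simp
  have hμ' : 200 * (κ * N / ρ) ≤ |(N : ℝ) ^ 2 * μ| := by
    have h1 : |(N : ℝ) ^ 2 * specMat Y 0 0| ≤ |(N : ℝ) ^ 2 * μ| := by
      rw [abs_mul, abs_mul]
      refine mul_le_mul_of_nonneg_left ?_ (abs_nonneg _)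
      exact abs_apply_self_le_of_eigenvalues (specMat_isHermitian Y) hmax 0
    refine le_trans ?_ h1
    rw [hdiag]
    have h2 : ∑ i, w i * q i ^ 2 - 3 * N
        = (∑ i, q i ^ 2 - N) / ρ + ∑ i, q i ^ 2 * excess (scaledRows B i)
          + -(3 * (N / ρ) * (ρ - 1 / 3)) := by
      have h3 : ∑ i, w i * q i ^ 2
          = ∑ i, (q i ^ 2) ^ 2 + ∑ i, q i ^ 2 * excess (scaledRows B i) := by
        rw [← Finset.sum_add_distrib]
        exact Finset.sum_congr rfl fun i _ => by rw [hw]; ring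
      rw [h3, hq4]
      field_simp
      ring
    have h3 : |(∑ i, q i ^ 2 - N) / ρ| ≤ κ * N / ρ := by
      rw [abs_div, abs_of_pos hρ]; gcongr
    have h4 : 300 * (κ * N / ρ) ≤ |3 * (N / ρ) * (ρ - 1 / 3)| := by
      rw [abs_mul, abs_of_pos (show 0 < 3 * (N / ρ) by positivity)]
      calc 300 * (κ * N / ρ) = 3 * (N / ρ) * (100 * κ) := by ring
        _ ≤ _ := by gcongr
    have h5 := hz.signal
    have h6 : 0 < κ * N / ρ := by positivity
    rw [h2]
    rw [abs_le] at h3 h5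
    rcases le_abs.1 h4 with h7 | h7
    · refine le_trans ?_ (neg_le_abs _); linarith
    · refine le_trans ?_ (le_abs_self _); linarith
  have hnorm' : x 0 ^ 2 + ‖(WithLp.toLp 2 x' : EuclideanSpace ℝ (Fin m))‖ ^ 2 = 1 := by
    rw [eucNorm, Real.sqrt_eq_one, Fin.sum_univ_succ] at hnorm
    rw [EuclideanSpace.real_norm_sq_eq]
    exact hnorm
  have heig : weightedGram Finset.univ w (scaledRows B) (3 * N) (WithLp.toLp 2 x')
      + x 0 • weightedCross Finset.univ w q (scaledRows B)
      = ((N : ℝ) ^ 2 * μ) • (WithLp.toLp 2 x' : EuclideanSpace ℝ (Fin m)) := by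
    ext j
    have h1 := hspec j.succ
    rw [hμ, Pi.smul_apply, smul_eq_mul, ← mul_assoc] at h1
    rw [weightedGram_apply, weightedCross]
    simp only [PiLp.add_apply, PiLp.sub_apply, PiLp.smul_apply, smul_eq_mul, WithLp.ofLp_sum,
      Finset.sum_apply]
    have h2 : ∀ i, (scaledRows B i).ofLp j = √N * Y i j.succ := fun i => rfl
    have h3 : x' j = x j.succ := rfl
    rw [h3, h1, Finset.mul_sum, sub_add_eq_add_sub, ← Finset.sum_add_distrib]
    congr 1
    refine Finset.sum_congr rfl fun i _ => ?_
    rw [hYx, h2]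
    ring
  obtain ⟨s, hs, hsx⟩ := exists_sign_forall_abs_sub_lt hρ hρ1 (by positivity) hL (q := q) (fun i => by
    rw [← Real.sqrt_inv, ← one_div]; exact Real.abs_le_sqrt (hq i)) hμ' hz.gram hz.cross
    hz.weight_mul_sq hz.weight_mul hz.norm_le hz.krylov hnorm' heig
  refine ⟨s, hs, fun j => mul_sign_mul_indicator_eq (by positivity) (hv.1 j) hs ?_⟩
  have h1 : ((Y * Q) *ᵥ u) j = Y j ⬝ᵥ x := by rw [← mulVec_mulVec]; rfl
  have h2 := hsx j
  rw [← hYx, show √N * (Y j ⬝ᵥ x) - s * q j = √N * (Y j ⬝ᵥ x - s * v j) by rw [hqdef]; ring,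
    abs_mul, abs_of_pos hsN] at h2
  rw [h1, Real.sqrt_mul hN.le, mul_inv]
  refine lt_of_mul_lt_mul_left (h2.trans_le (le_of_eq ?_)) hsN.le
  field_simp

lemma map_scaledRows_iidGaussVec {N : ℕ} (m : ℕ) (hN : 0 < (N : ℝ)) :
    (iidGaussVec N m (N : NNReal)⁻¹).map scaledRows
      = Measure.pi fun _ : Fin N => stdGaussian (EuclideanSpace ℝ (Fin m)) := by
  have h1 : (gaussianReal 0 (N : NNReal)⁻¹).map (√N * ·) = gaussianReal 0 1 := by
    rw [gaussianReal_map_const_mul, mul_zero]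
    congr 1
    ext
    push_cast
    rw [Real.sq_sqrt hN.le, mul_inv_cancel₀ hN.ne']
  have h2 : (gaussVec m (N : NNReal)⁻¹).map (fun b => WithLp.toLp 2 (√N • b))
      = stdGaussian (EuclideanSpace ℝ (Fin m)) := by
    have h3 : (gaussVec m (N : NNReal)⁻¹).map (fun b j => √N * b j)
        = Measure.pi fun _ : Fin m => gaussianReal 0 1 := by
      rw [gaussVec, Measure.pi_map_pi (fun _ => by fun_prop), h1]
    rw [← map_pi_eq_stdGaussian, ← h3, Measure.map_map (by fun_prop) (by fun_prop)]
    rfl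
  have : SigmaFinite ((gaussVec m (N : NNReal)⁻¹).map (fun b => WithLp.toLp 2 (√N • b))) := by
    rw [h2]; infer_instance
  rw [← h2]
  exact Measure.pi_map_pi (μ := fun _ : Fin N => gaussVec m (N : NNReal)⁻¹)
    (f := fun _ b => WithLp.toLp 2 (√N • b)) (fun _ => by fun_prop)

/-- A lower bound for the (outer) measure of a set under a product of probability measures, from
lower bounds for its sections. -/
lemma ofReal_one_sub_le_prod {X Y : Type*} [MeasurableSpace X] [MeasurableSpace Y]
    (μ : Measure X) (ν : Measure Y) [IsProbabilityMeasure μ] [IsProbabilityMeasure ν] {δ : ℝ}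
    (hδ : 0 ≤ δ) (hδ1 : δ ≤ 1) {G : Set X} {S : Set (X × Y)}
    (hG : μ Gᶜ ≤ ENNReal.ofReal (δ / 2))
    (hS : ∀ x ∈ G, ν {y | (x, y) ∉ S} ≤ ENNReal.ofReal (δ / 2)) :
    ENNReal.ofReal (1 - δ) ≤ μ.prod ν S := by
  have hc : ENNReal.ofReal (1 - δ / 2) = 1 - ENNReal.ofReal (δ / 2) := by
    rw [ENNReal.ofReal_sub _ (by positivity), ENNReal.ofReal_one]
  set T := toMeasurable (μ.prod ν) S with hT
  have hTm : MeasurableSet T := measurableSet_toMeasurable _ _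
  have hG' : ENNReal.ofReal (1 - δ / 2) ≤ μ G := by
    rw [hc, tsub_le_iff_right]
    calc 1 = μ (G ∪ Gᶜ) := by rw [Set.union_compl_self, measure_univ]
      _ ≤ _ := (measure_union_le _ _).trans (by gcongr)
  have hsec : ∀ x ∈ G, ENNReal.ofReal (1 - δ / 2) ≤ ν (Prod.mk x ⁻¹' T) := by
    intro x hx
    rw [hc, tsub_le_iff_right]
    calc 1 = ν (Prod.mk x ⁻¹' T ∪ {y | (x, y) ∉ S}) := by
          rw [← measure_univ (μ := ν)]
          congr 1
          refine (Set.eq_univ_of_forall fun y => ?_).symm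
          by_cases h : (x, y) ∈ S
          · exact Or.inl (subset_toMeasurable _ _ h)
          · exact Or.inr h
      _ ≤ _ := (measure_union_le _ _).trans (by gcongr; exact hS x hx)
  rw [← measure_toMeasurable S, Measure.prod_apply hTm]
  calc ENNReal.ofReal (1 - δ) ≤ ENNReal.ofReal (1 - δ / 2) * ENNReal.ofReal (1 - δ / 2) := by
        rw [← ENNReal.ofReal_mul (by linarith)]
        apply ENNReal.ofReal_le_ofReal
        nlinarith [sq_nonneg δ]
    _ ≤ ENNReal.ofReal (1 - δ / 2)
        * μ {x | ENNReal.ofReal (1 - δ / 2) ≤ ν (Prod.mk x ⁻¹' T)} := by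
        gcongr
        exact hG'.trans (measure_mono hsec)
    _ ≤ _ := mul_meas_ge_le_lintegral (measurable_measure_prodMk_left hTm) _

lemma ofReal_one_sub_le_recovery {N m : ℕ} {ρ δ κ c c₃ : ℝ} (hκ : 0 < κ) (hκ1 : κ ≤ 1)
    (hc : c = κ ^ 2 / 100000000) (hc₃ : c₃ = c / 4100) (hN10 : 10 ≤ N)
    (hNexp : Real.exp (1 / c₃ ^ 2) ≤ N) (hρ : 0 < ρ) (hρ1 : ρ ≤ 1) (hδ : 0 < δ)
    (hδ2 : δ < 1 / 2) (hN7 : Real.log (N / δ) ^ 7 ≤ N)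
    (hρN : 12 / κ ^ 2 * Real.log (1 / δ) / N ≤ ρ) (hgap : 100 * κ ≤ |ρ - 1 / 3|)
    (hsmall : (((m + 1 : ℕ) : ℝ) * ρ / √N + √(((m + 1 : ℕ) : ℝ) / N)) * Real.log (N / δ) ≤ c₃)
    {Q : Matrix (Fin (m + 1)) (Fin (m + 1)) ℝ} (hQ : Qᵀ * Q = 1) :
    ENNReal.ofReal (1 - δ) ≤ ((brVec N ρ).prod (iidGaussVec N m (N : NNReal)⁻¹))
      {w | ∀ u : Fin (m + 1) → ℝ,
        IsLeadingEigen (specMat (gaussBasis (n := m + 1) w.1 w.2 * Q)) u →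
        ∃ s : ℝ, (s = 1 ∨ s = -1) ∧ ∀ j : Fin N,
          (√(N * ρ))⁻¹ * Real.sign (s * ((gaussBasis (n := m + 1) w.1 w.2 * Q) *ᵥ u) j)
            * Set.indicator {x : ℝ | 0.5 * (√(N * ρ))⁻¹ ≤ |x|} 1
              (((gaussBasis (n := m + 1) w.1 w.2 * Q) *ᵥ u) j)
          = w.1 j} := by
  have := isProbabilityMeasure_brMeasure N hρ.le hρ1
  have : IsProbabilityMeasure (brVec N ρ) := by unfold brVec; infer_instance
  have : IsProbabilityMeasure (iidGaussVec N m (N : NNReal)⁻¹) := by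
    unfold iidGaussVec; infer_instance
  have hN10' : (10 : ℝ) ≤ N := by exact_mod_cast hN10
  have hN : (0 : ℝ) < N := by linarith
  have hc0 : 0 < c := by rw [hc]; positivity
  have hc1 : c ≤ 1 := by
    rw [hc]; linarith [pow_le_one₀ (n := 2) hκ.le hκ1]
  have hc₃0 : 0 < c₃ := by rw [hc₃]; positivity
  have hc₃1 : c₃ ≤ 1 := by rw [hc₃]; linarith
  set L := Real.log (N / δ) with hLdef
  have hLexp : Real.exp (-L) = δ / N := by
    rw [Real.exp_neg, hLdef, Real.exp_log (by positivity), inv_div]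
  have hLlog : 1 / c₃ ^ 2 ≤ L := by
    rw [hLdef, Real.le_log_iff_exp_le (by positivity)]
    refine hNexp.trans ?_
    rw [le_div_iff₀ hδ]
    exact mul_le_of_le_one_right hN.le (by linarith)
  have hcL : 1 ≤ c₃ ^ 2 * L := by
    rwa [div_le_iff₀ (by positivity), mul_comm] at hLlog
  have hL : 1 ≤ L := hcL.trans
    (mul_le_of_le_one_left (by
      refine le_trans ?_ hLlog; positivity) (pow_le_one₀ hc₃0.le hc₃1))
  have hn : (1 : ℝ) ≤ ((m + 1 : ℕ) : ℝ) := by exact_mod_cast Nat.le_add_left 1 m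
  have hE : (Module.finrank ℝ (EuclideanSpace ℝ (Fin m)) : ℝ) ≤ ((m + 1 : ℕ) : ℝ) := by
    rw [finrank_euclideanSpace, Fintype.card_fin]; exact_mod_cast Nat.le_succ m
  have h12 : 12 * Real.log (1 / δ) ≤ κ ^ 2 * (N * ρ) := by
    rw [div_le_iff₀ hN, div_mul_eq_mul_div, div_le_iff₀ (by positivity)] at hρN
    linarith
  have hρN1 : 1 ≤ ρ * N := by
    have h1 : Real.log 2 ≤ Real.log (1 / δ) :=
      Real.log_le_log (by norm_num) (by rw [le_div_iff₀ hδ]; linarith)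
    have h2 := Real.log_two_gt_d9
    have h3 : κ ^ 2 * (N * ρ) ≤ N * ρ :=
      mul_le_of_le_one_left (by positivity) (pow_le_one₀ hκ.le hκ1)
    linarith
  obtain ⟨ha, hb, hcc⟩ := smallness_bounds hc0 hc1 hc₃ (by linarith) hn hρ hρ1 hL hcL hN7 hsmall rfl
  refine ofReal_one_sub_le_prod _ _ hδ.le (by linarith) (G := {v | IsTypical N ρ κ v})
    (brVec_not_isTypical_le hN hρ hρ1 hκ.le hκ1 hδ hδ2 h12) fun v hv => ?_
  obtain ⟨hq, hq2, hq4⟩ := IsTypical.scaled_bounds hN hρ hv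
  have hq4' : ∑ i, ((√N * v i) ^ 2) ^ 2 ≤ 2 * N / ρ := by
    rw [hq4]
    gcongr
    have h1 := (abs_le.1 hq2).2
    have h2 : κ * N ≤ N := mul_le_of_le_one_left hN.le hκ1
    linarith
  have hnoise := measure_not_noiseEvent_le (E := EuclideanSpace ℝ (Fin m))
    (q := fun i => √N * v i) (Fintype.card_fin N) hN10' hκ hκ1 hρ hρ1 hρN1 hδ (by linarith) hn hE
    hL hLexp rfl hc ha hb hcc hq hq2 hq4'
  rw [← map_scaledRows_iidGaussVec m hN] at hnoise
  have hmeas : Measurable (scaledRows (N := N) (m := m)) := by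
    unfold scaledRows; fun_prop
  refine le_trans (measure_mono fun B hB => ?_)
    ((Measure.le_map_apply hmeas.aemeasurable _).trans hnoise)
  exact fun hz => hB fun u hu => exact_recovery_of_noiseEvent hQ hN hρ hρ1 hκ hL hgap hv hz hu

end PlantedVector

/-- exact recovery of a planted Bernoulli–Rademacher vector, Gaussian basis:
in the Gaussian-basis model with planted `v ∼ BR(N, ρ)` and observation `Ỹ = YQ`, with `ũ`
the unit leading eigenvector of `M̃`, for every constant `c₁ ∈ (0, 0.1)` there exist
constants `C₂, c₃ > 0` (depending only on `c₁`) and an absolute constant `N₀` such that for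
every `δ ∈ (0, 1/2)`: if `N ≥ log⁷(N/δ)`, `ρ ≥ C₂ log(1/δ)/N`, `|ρ - 1/3| ≥ c₁` and
`(nρ/√N + √(n/N)) log(N/δ) ≤ c₃`, then with probability at least `1 - δ` there is a sign
`s ∈ {±1}` with `(1/√(Nρ)) sign(s (Ỹũ)_j) 1{|(Ỹũ)_j| ≥ 0.5/√(Nρ)} = v_j` for all `j`. -/
theorem stmt_8 (c₁ : ℝ) (hc₁ : 0 < c₁) (hc₁' : c₁ < 0.1) :
    ∃ C₂ : ℝ, 0 < C₂ ∧ ∃ c₃ : ℝ, 0 < c₃ ∧ ∃ N₀ : ℕ,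
      ∀ (N n : ℕ) (ρ δ : ℝ), N₀ ≤ N → 1 ≤ n → n ≤ N → 0 < ρ → ρ ≤ 1 →
        0 < δ → δ < 1 / 2 →
        (Real.log (N / δ)) ^ 7 ≤ N →
        C₂ * Real.log (1 / δ) / N ≤ ρ →
        c₁ ≤ |ρ - 1 / 3| →
        ((n : ℝ) * ρ / Real.sqrt N + Real.sqrt ((n : ℝ) / N)) * Real.log (N / δ) ≤ c₃ →
        ∀ Q : Matrix (Fin n) (Fin n) ℝ, Qᵀ * Q = 1 →
        ENNReal.ofReal (1 - δ) ≤
          ((brVec N ρ).prod (iidGaussVec N (n - 1) ((N : NNReal))⁻¹))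
            {w | ∀ u : Fin n → ℝ,
              IsLeadingEigen (specMat (gaussBasis w.1 w.2 * Q)) u →
              ∃ s : ℝ, (s = 1 ∨ s = -1) ∧ ∀ j : Fin N,
                (Real.sqrt (N * ρ))⁻¹
                    * Real.sign (s * (gaussBasis w.1 w.2 * Q).mulVec u j)
                    * Set.indicator {x : ℝ | 0.5 * (Real.sqrt (N * ρ))⁻¹ ≤ |x|} 1
                        ((gaussBasis w.1 w.2 * Q).mulVec u j)
                  = w.1 j} := by
  have hκ : (0 : ℝ) < c₁ / 100 := by positivity
  have hκ1 : c₁ / 100 ≤ 1 := by norm_num at hc₁'; linarith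
  set c₃ : ℝ := (c₁ / 100) ^ 2 / 100000000 / 4100 with hc₃
  refine ⟨12 / (c₁ / 100) ^ 2, by positivity, c₃, by positivity,
    ⌈Real.exp (1 / c₃ ^ 2)⌉₊ + 10, ?_⟩
  intro N n ρ δ hN0 hn _ hρ hρ1 hδ hδ2 h7 hC hgap hsmall Q hQ
  obtain ⟨m, rfl⟩ : ∃ m, n = m + 1 := ⟨n - 1, by omega⟩
  have hNexp : Real.exp (1 / c₃ ^ 2) ≤ N :=
    (Nat.le_ceil _).trans (by exact_mod_cast (Nat.le_add_right _ 10).trans hN0)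
  exact PlantedVector.ofReal_one_sub_le_recovery hκ hκ1 rfl hc₃
    ((Nat.le_add_left 10 _).trans hN0) hNexp hρ hρ1 hδ hδ2 h7 hC (by linarith) hsmall hQ
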